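/- Let p be a prime with p ≡ 1 (mod 4) and let K = ℚ(√p). Then the counting function a_K(n) (the number of quadratic extensions L/K inside a fixed algebraic closure with absolute discriminant at most n) satisfies a_K(n) = C·n + o(n) as n → ∞, where C = (2 · Reg_K · h_K)/(p^{5/2} · ζ_K(2)) · ∏_{𝔭 | 2} g_𝔭(1)/(1 + N(𝔭)^{-1}); here Reg_K = log ε is the regulator of K (ε the fundamental unit), the product is over the prime ideals 𝔭 of 𝓞_K above 2, and g_𝔭(s) = 1 + N(𝔭)^{-2s} + 2·N(𝔭)^{-3s} if N(𝔭) = 2, while g_𝔭(s) = 1 + 3·N(𝔭)^{-2s} + 4·N(𝔭)^{-3s} if N(𝔭) = 4. -/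

import Mathlib

open NumberField Filter

/-- The value of the Dedekind zeta function of `K` at `2`, defined as the series
`∑ N(I)^{-2}` over nonzero ideals `I` of the ring of integers of `K`. -/
noncomputable def dedekindZetaTwo (K : Type*) [Field K] [NumberField K] : ℝ :=
  ∑' I : {I : Ideal (𝓞 K) // I ≠ ⊥}, ((Ideal.absNorm I.1 : ℝ)) ^ (-2 : ℤ)

/-- The local factor `g_𝔭(s)` at a prime `𝔭` above 2 with norm `q`:
`1 + q^{-2s} + 2 q^{-3s}` if `q = 2` (split case), and
`1 + 3 q^{-2s} + 4 q^{-3s}` otherwise (inert case, `q = 4`). -/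
noncomputable def gFactor (q : ℕ) (s : ℝ) : ℝ :=
  if q = 2 then 1 + (q : ℝ) ^ (-(2 * s)) + 2 * (q : ℝ) ^ (-(3 * s))
  else 1 + 3 * (q : ℝ) ^ (-(2 * s)) + 4 * (q : ℝ) ^ (-(3 * s))

/-- `quadCount K n` is the number of quadratic extensions `L` of `K` inside a fixed
algebraic closure of `K` with absolute discriminant at most `n`. -/
noncomputable def quadCount (K : Type*) [Field K] [NumberField K] (n : ℕ) : ℕ :=
  Nat.card {L : IntermediateField K (AlgebraicClosure K) //
    Module.finrank K L = 2 ∧ ∃ h : NumberField L, |@NumberField.discr L _ h| ≤ (n : ℤ)}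

section PartE1
open NumberField Filter Module
open scoped nonZeroDivisors

theorem trace_sqrt_zero {K L : Type*} [Field K] [CharZero K] [Field L] [Algebra K L]
    (hfr : finrank K L = 2) (r : L) (δ : K) (hδ : ¬ IsSquare δ) (hr : r ^ 2 = algebraMap K L δ) :
    Algebra.trace K L r = 0 := by
  have hirr : Irreducible (Polynomial.X ^ 2 - Polynomial.C δ) := by
    apply X_pow_sub_C_irreducible_of_prime Nat.prime_two
    intro b hb
    exact hδ ⟨b, by rw [← hb, sq]⟩
  have hmin : minpoly K r = Polynomial.X ^ 2 - Polynomial.C δ := by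
    symm
    apply minpoly.eq_of_irreducible_of_monic hirr
    · simp [hr]
    · exact Polynomial.monic_X_pow_sub_C δ two_ne_zero
  have : FiniteDimensional K L := FiniteDimensional.of_finrank_pos (by omega)
  rw [trace_eq_finrank_mul_minpoly_nextCoeff, hmin]
  rw [Polynomial.nextCoeff_of_natDegree_pos]
  · simp
  · simp

theorem disc_formula {K L : Type*} [Field K] [NumberField K] [Field L] [NumberField L]
    [Algebra K L] (hfr : finrank K L = 2) (r : L) (δ : K) (hδ : ¬ IsSquare δ)
    (hr : r ^ 2 = algebraMap K L δ) (J : (FractionalIdeal (𝓞 K)⁰ K)ˣ) (ρ : K)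
    (hJ : ∀ z : L, IsIntegral ℤ z ↔ ∃ a : 𝓞 K, ∃ y ∈ J.1,
      z = algebraMap K L a + algebraMap K L y * (algebraMap K L ρ + r)) :
    |(discr L : ℚ)| = 4 ^ (finrank ℚ K) * (discr K : ℚ) ^ 2 * |Algebra.norm ℚ δ| *
      (FractionalIdeal.absNorm J.1) ^ 2 := by
  classical
  let ι := Free.ChooseBasisIndex ℤ (𝓞 K)
  have hcard : Fintype.card (Free.ChooseBasisIndex ℤ (𝓞 K)) =
      Fintype.card (Free.ChooseBasisIndex ℤ J.1) := by
    rw [← finrank_eq_card_chooseBasisIndex, ← finrank_eq_card_chooseBasisIndex]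
    exact (fractionalIdeal_rank K J).symm
  let e : ι ≃ Free.ChooseBasisIndex ℤ J.1 := Fintype.equivOfCardEq hcard
  let b : Basis ι ℚ K := integralBasis K
  let c : Basis ι ℚ K := (basisOfFractionalIdeal K J).reindex e.symm
  have hQ : |b.det c| = FractionalIdeal.absNorm J.1 := det_basisOfFractionalIdeal_eq_absNorm K J e
  let am := algebraMap K L
  let B0 : ι ⊕ ι → L := Sum.elim (fun i => am (b i)) (fun i => am (b i) * r)
  let B1 : ι ⊕ ι → L := Sum.elim (fun i => am (b i)) (fun i => am (c i) * (am ρ + r))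
  let Q : Matrix ι ι ℚ := b.toMatrix c
  let R : Matrix ι ι ℚ := b.toMatrix (fun i => ρ * c i)
  let P : Matrix (ι ⊕ ι) (ι ⊕ ι) ℚ := Matrix.fromBlocks 1 R 0 Q
  have hsum : ∀ x : K, ∑ i, am (b i) * algebraMap ℚ L (b.repr x i) = am x := by
    intro x
    conv_rhs => rw [← b.sum_repr x]
    rw [map_sum]
    refine Finset.sum_congr rfl fun i _ => ?_
    rw [Algebra.smul_def, map_mul, mul_comm, ← IsScalarTower.algebraMap_apply]
  have hB1 : B1 = Matrix.vecMul B0 (P.map (algebraMap ℚ L)) := by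
    funext j
    rcases j with j | j
    · simp only [Matrix.vecMul, dotProduct, Fintype.sum_sum_type, P, B0, B1, Matrix.map_apply,
        Sum.elim_inl, Sum.elim_inr, Matrix.fromBlocks_apply₁₁, Matrix.fromBlocks_apply₂₁,
        Matrix.zero_apply, map_zero, mul_zero, Finset.sum_const_zero, add_zero]
      rw [Finset.sum_eq_single j]
      · simp
      · intro i _ hij; simp [Matrix.one_apply_ne hij]
      · simp
    · simp only [Matrix.vecMul, dotProduct, Fintype.sum_sum_type, P, B0, B1, Matrix.map_apply,
        Sum.elim_inl, Sum.elim_inr, Matrix.fromBlocks_apply₁₂, Matrix.fromBlocks_apply₂₂, R, Q,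
        Basis.toMatrix_apply]
      rw [hsum]
      have : ∑ x, am (b x) * r * algebraMap ℚ L (b.repr (c j) x) = am (c j) * r := by
        rw [← hsum (c j), Finset.sum_mul]
        exact Finset.sum_congr rfl fun i _ => by ring
      rw [this, map_mul]; ring
  have htr1 : ∀ x : K, Algebra.trace ℚ L (am x) = 2 * Algebra.trace ℚ K x := by
    intro x
    rw [← Algebra.trace_trace (S := K), Algebra.trace_algebraMap, hfr, map_nsmul]
    simp
  have htr2 : ∀ x : K, Algebra.trace ℚ L (am x * r) = 0 := by
    intro x
    rw [← Algebra.trace_trace (S := K), ← Algebra.smul_def, map_smul,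
      trace_sqrt_zero hfr r δ hδ hr]
    simp
  let T : Matrix ι ι ℚ := Algebra.traceMatrix ℚ b
  have hT : T.det = discr K := by
    rw [coe_discr]; rfl
  let T' : Matrix ι ι ℚ := Matrix.of fun i j => Algebra.trace ℚ K (δ * (b i * b j))
  have hT' : T' = (Algebra.leftMulMatrix b δ).transpose * T := by
    ext i j
    simp only [T', T, Matrix.of_apply, Matrix.mul_apply, Matrix.transpose_apply,
      Algebra.traceMatrix_apply, Algebra.traceForm_apply, Algebra.leftMulMatrix_eq_repr_mul]
    conv_lhs => rw [← mul_assoc, ← b.sum_repr (δ * b i), Finset.sum_mul, map_sum]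
    refine Finset.sum_congr rfl fun k _ => ?_
    rw [Algebra.smul_mul_assoc, map_smul, smul_eq_mul]
  have htm : Algebra.traceMatrix ℚ B0 = Matrix.fromBlocks ((2:ℚ) • T) 0 0 ((2:ℚ) • T') := by
    ext i j
    rcases i with i | i <;> rcases j with j | j <;>
      simp only [Algebra.traceMatrix_apply, Algebra.traceForm_apply, B0, Sum.elim_inl, Sum.elim_inr,
        Matrix.fromBlocks_apply₁₁, Matrix.fromBlocks_apply₁₂, Matrix.fromBlocks_apply₂₁,
        Matrix.fromBlocks_apply₂₂, Matrix.smul_apply, Matrix.zero_apply, smul_eq_mul, T, T',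
        Matrix.of_apply]
    · rw [← map_mul, htr1]
    · rw [← mul_assoc, ← map_mul, htr2]
    · rw [mul_right_comm, ← map_mul, htr2]
    · rw [show am (b i) * r * (am (b j) * r) = am (δ * (b i * b j)) by
        rw [map_mul, map_mul]; change _ = algebraMap K L δ * _; rw [← hr]; ring, htr1]
  have hcardι : Fintype.card ι = finrank ℚ K := (finrank_eq_card_basis b).symm
  have hd0 : Algebra.discr ℚ B0 = 4 ^ (finrank ℚ K) * (discr K : ℚ) ^ 2 * Algebra.norm ℚ δ := by
    rw [Algebra.discr_def, htm, Matrix.det_fromBlocks_zero₂₁, Matrix.det_smul, Matrix.det_smul, hT',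
      Matrix.det_mul, Matrix.det_transpose, ← Algebra.norm_eq_matrix_det, hT, hcardι,
      show (4:ℚ) = 2 * 2 by norm_num, mul_pow]
    ring
  have hd1 : Algebra.discr ℚ B1 = (b.det c) ^ 2 * Algebra.discr ℚ B0 := by
    rw [hB1, Algebra.discr_of_matrix_vecMul]
    congr 2
    rw [Matrix.det_fromBlocks_zero₂₁, Matrix.det_one, one_mul]
    rfl
  have hδ0 : δ ≠ 0 := by rintro rfl; exact hδ ⟨0, by simp⟩
  have hne : Algebra.discr ℚ B1 ≠ 0 := by
    rw [hd1, hd0]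
    refine mul_ne_zero (pow_ne_zero _ ?_) (mul_ne_zero (mul_ne_zero (by positivity)
      (pow_ne_zero _ (by exact_mod_cast discr_ne_zero K))) ?_)
    · exact (b.isUnit_det c).ne_zero
    · exact Algebra.norm_ne_zero_iff.mpr hδ0
  have hli : LinearIndependent ℚ B1 := by
    by_contra h
    exact hne (Algebra.discr_zero_of_not_linearIndependent ℚ h)
  have hint : ∀ j, IsIntegral ℤ (B1 j) := by
    intro j
    rcases j with j | j
    · exact (hJ _).2 ⟨RingOfIntegers.basis K j, 0, FractionalIdeal.zero_mem _, by
        simp only [B1, Sum.elim_inl, b, map_zero, zero_mul, add_zero]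
        rw [integralBasis_apply]⟩
    · refine (hJ _).2 ⟨0, c j, ?_, by simp [B1, am]⟩
      simp only [c, Basis.reindex_apply, basisOfFractionalIdeal_apply]
      exact SetLike.coe_mem _
  let B2 : ι ⊕ ι → 𝓞 L := fun j => ⟨B1 j, hint j⟩
  have hli2 : LinearIndependent ℤ B2 := by
    have h1 : LinearIndependent ℤ B1 := LinearIndependent.restrict_scalars
      (R := ℤ) (by
        intro x y hxy
        simpa using hxy) hli
    exact LinearIndependent.of_comp (Algebra.linearMap (𝓞 L) L |>.restrictScalars ℤ) h1
  have hspan : ⊤ ≤ Submodule.span ℤ (Set.range B2) := by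
    rintro z -
    obtain ⟨a, y, hy, hz⟩ := (hJ (z : L)).1 z.isIntegral_coe
    have hya : y ∈ Submodule.span ℤ (Set.range (basisOfFractionalIdeal K J)) :=
      (mem_span_basisOfFractionalIdeal K).2 hy
    have hrange : Set.range c = Set.range (basisOfFractionalIdeal K J) := by
      simp [c]
    rw [← hrange] at hya
    have haa := (RingOfIntegers.basis K).mem_span a
    obtain ⟨f, hf⟩ := (Submodule.mem_span_range_iff_exists_fun ℤ).1 hya
    obtain ⟨g, hg⟩ := (Submodule.mem_span_range_iff_exists_fun ℤ).1 haa
    refine (Submodule.mem_span_range_iff_exists_fun ℤ).2 ⟨Sum.elim g f, ?_⟩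
    apply RingOfIntegers.ext
    rw [Fintype.sum_sum_type, hz, ← hf, ← hg]
    have hB2 : ∀ j, ((B2 j : 𝓞 L) : L) = B1 j := fun j => rfl
    simp only [Sum.elim_inl, Sum.elim_inr, map_add, map_sum, map_zsmul, Finset.sum_mul, hB2]
    congr 1
    · refine Finset.sum_congr rfl fun i _ => ?_
      simp only [B1, Sum.elim_inl, b]
      rw [integralBasis_apply]
    · refine Finset.sum_congr rfl fun i _ => ?_
      simp only [B1, Sum.elim_inr, smul_mul_assoc, am]
  let B : Basis (ι ⊕ ι) ℤ (𝓞 L) := Basis.mk hli2 hspan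
  have hB : (Algebra.discr ℚ B1) = discr L := by
    rw [← discr_eq_discr L B, ← eq_intCast (algebraMap ℤ ℚ),
      ← Algebra.discr_localizationLocalization ℤ ℤ⁰ L B]
    congr 1
    funext j
    simp only [Basis.localizationLocalization_apply]
    rw [Basis.mk_apply]
    rfl
  rw [← hB, hd1, hd0, abs_mul, abs_pow, hQ, abs_mul, abs_of_nonneg
    (a := (4:ℚ) ^ (finrank ℚ K) * (discr K : ℚ) ^ 2) (by positivity)]
  ring
end PartE1

section PartE2
open NumberField Filter Module
open scoped nonZeroDivisors

theorem mem_one_iff_int {K : Type*} [Field K] [NumberField K] (x : K) :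
    x ∈ (1 : FractionalIdeal (𝓞 K)⁰ K) ↔ IsIntegral ℤ x := by
  rw [FractionalIdeal.mem_one_iff]
  constructor
  · rintro ⟨y, rfl⟩; exact y.isIntegral_coe
  · intro h; exact ⟨⟨x, h⟩, rfl⟩

theorem isIntegral_of_quad {K L : Type*} [Field K] [Field L] [Algebra K L]
    {z : L} {t n : K} (ht : IsIntegral ℤ t) (hn : IsIntegral ℤ n)
    (h : z ^ 2 - algebraMap K L t * z + algebraMap K L n = 0) : IsIntegral ℤ z := by
  have h1 : IsIntegral (integralClosure ℤ K) z := by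
    refine ⟨Polynomial.X ^ 2 - Polynomial.C (⟨t, ht⟩ : integralClosure ℤ K) * Polynomial.X
      + Polynomial.C (⟨n, hn⟩ : integralClosure ℤ K), ?_, ?_⟩
    · monicity!
    · simp only [Polynomial.eval₂_add, Polynomial.eval₂_sub, Polynomial.eval₂_mul,
        Polynomial.eval₂_pow, Polynomial.eval₂_X, Polynomial.eval₂_C]
      exact h
  have := integralClosure.AlgebraIsIntegral (R := ℤ) (A := K)
  exact isIntegral_trans z h1

theorem exists_coords {K L : Type*} [Field K] [Field L] [Algebra K L]
    (hfr : finrank K L = 2) (r : L) (hr : ∀ x : K, r ≠ algebraMap K L x) (z : L) :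
    ∃ x y : K, z = algebraMap K L x + algebraMap K L y * r := by
  have hli : LinearIndependent K ![(1 : L), r] := by
    rw [LinearIndependent.pair_iff' one_ne_zero]
    intro a ha
    exact hr a (by rw [← ha, Algebra.smul_def, mul_one])
  let b := basisOfLinearIndependentOfCardEqFinrank hli (by simp [hfr])
  have := b.sum_repr z
  rw [Fin.sum_univ_two] at this
  simp only [b, coe_basisOfLinearIndependentOfCardEqFinrank, Matrix.cons_val_zero,
    Matrix.cons_val_one, Algebra.smul_def, mul_one] at this
  exact ⟨_, _, this.symm⟩

theorem sqrt_not_mem {K L : Type*} [Field K] [Field L] [Algebra K L] (r : L) (δ : K)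
    (hδ : ¬ IsSquare δ) (hr : r ^ 2 = algebraMap K L δ) (x : K) : r ≠ algebraMap K L x := by
  rintro rfl
  rw [← map_pow] at hr
  exact hδ ⟨x, by rw [← (algebraMap K L).injective hr, sq]⟩

theorem isInt_iff {K L : Type*} [Field K] [CharZero K] [Field L] [Algebra K L]
    (hfr : finrank K L = 2) (r : L) (δ : K) (hδ : ¬ IsSquare δ)
    (hr : r ^ 2 = algebraMap K L δ) (x y : K) :
    IsIntegral ℤ (algebraMap K L x + algebraMap K L y * r) ↔
      IsIntegral ℤ (2 * x) ∧ IsIntegral ℤ (x ^ 2 - δ * y ^ 2) := by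
  have : FiniteDimensional K L := FiniteDimensional.of_finrank_pos (by omega)
  constructor
  · intro h
    have h1 : IsIntegral ℤ (2 * x) := by
      have := Algebra.isIntegral_trace (R := ℤ) (L := K) h
      rw [map_add, ← Algebra.smul_def, map_smul, trace_sqrt_zero hfr r δ hδ hr,
        Algebra.trace_algebraMap, hfr] at this
      simpa using this
    refine ⟨h1, ?_⟩
    have h2 : IsIntegral ℤ (algebraMap K L (2 * x)) := h1.algebraMap
    have h3 := h.mul (h2.sub h)
    rw [show (algebraMap K L x + algebraMap K L y * r) * (algebraMap K L (2 * x) -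
        (algebraMap K L x + algebraMap K L y * r)) = algebraMap K L (x ^ 2 - δ * y ^ 2) by
      simp only [map_mul, map_sub, map_pow, map_ofNat, ← hr]; ring] at h3
    exact (isIntegral_algebraMap_iff (algebraMap K L).injective).1 h3
  · rintro ⟨h1, h2⟩
    refine isIntegral_of_quad h1 h2 ?_
    simp only [map_mul, map_sub, map_pow, map_ofNat, ← hr]; ring

theorem exists_G {K L : Type*} [Field K] [NumberField K] [Field L] [NumberField L]
    [Algebra K L] (hfr : finrank K L = 2) (r : L) (δ : K) (hδ : ¬ IsSquare δ)
    (hr : r ^ 2 = algebraMap K L δ) :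
    ∃ G : FractionalIdeal (𝓞 K)⁰ K, G ≠ 0 ∧
      (∀ q : FractionalIdeal (𝓞 K)⁰ K, q ≠ 0 →
        ((∃ σ ∈ q, (δ - σ ^ 2) / 4 ∈ q * q) ↔ G ≤ q)) ∧
      |(discr L : ℚ)| * (FractionalIdeal.absNorm G) ^ 2 =
        (discr K : ℚ) ^ 2 * |Algebra.norm ℚ δ| := by
  classical
  let am := algebraMap K L
  have hint : ∀ x y : K, IsIntegral ℤ (am x + am y * r) ↔
      IsIntegral ℤ (2 * x) ∧ IsIntegral ℤ (x ^ 2 - δ * y ^ 2) := isInt_iff hfr r δ hδ hr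
  have hδ0 : δ ≠ 0 := by rintro rfl; exact hδ ⟨0, by simp⟩
  have hO : ∀ a : 𝓞 K, IsIntegral ℤ (am a) := fun a => a.isIntegral_coe.algebraMap
  let Js : Submodule (𝓞 K) K :=
    { carrier := {y | ∃ x, IsIntegral ℤ (am x + am y * r)}
      zero_mem' := ⟨0, by simpa using isIntegral_zero⟩
      add_mem' := by
        rintro y y' ⟨x, hx⟩ ⟨x', hx'⟩
        refine ⟨x + x', ?_⟩
        have := hx.add hx'
        rwa [show am x + am y * r + (am x' + am y' * r) = am (x + x') + am (y + y') * r by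
          simp only [map_add]; ring] at this
      smul_mem' := by
        rintro c y ⟨x, hx⟩
        refine ⟨(c : K) * x, ?_⟩
        have := (hO c).mul hx
        rwa [show am c * (am x + am y * r) = am ((c : K) * x) + am (c • y) * r by
          rw [Algebra.smul_def]; simp only [map_mul]; ring] at this }
  obtain ⟨u, v, hv, huv⟩ := IsFractionRing.div_surjective (A := 𝓞 K) δ
  have hv0 : (v : K) ≠ 0 := by
    simpa using nonZeroDivisors.ne_zero hv
  have hu0 : u ≠ 0 := by
    rintro rfl
    apply hδ0; rw [← huv]; simp
  have hδv : δ * v = u := by rw [← huv]; field_simp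
  have hfrac : IsFractional (𝓞 K)⁰ Js := by
    refine ⟨2 * u, mem_nonZeroDivisors_of_ne_zero (mul_ne_zero two_ne_zero hu0), ?_⟩
    rintro y ⟨x, hx⟩
    obtain ⟨h1, h2⟩ := (hint x y).1 hx
    have h3 : IsIntegral ℤ ((u : K) * v * ((2 * x) ^ 2 - 4 * (x ^ 2 - δ * y ^ 2))) :=
      ((u.isIntegral_coe).mul v.isIntegral_coe).mul ((h1.pow 2).sub
        (IsIntegral.mul (by simpa using isIntegral_algebraMap (R := ℤ) (A := K) (x := 4)) h2))
    rw [show (u : K) * v * ((2 * x) ^ 2 - 4 * (x ^ 2 - δ * y ^ 2)) = (2 * u * y) ^ 2 by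
      rw [← hδv]; ring] at h3
    have h4 := IsIntegral.of_pow two_pos h3
    exact ⟨⟨_, h4⟩, by rw [Algebra.smul_def, map_mul, map_ofNat]; rfl⟩
  let J : FractionalIdeal (𝓞 K)⁰ K := ⟨Js, hfrac⟩
  have hJmem : ∀ y, y ∈ J ↔ ∃ x, IsIntegral ℤ (am x + am y * r) := fun y => Iff.rfl
  have hJ0 : J ≠ 0 := by
    intro h
    have : (v : K) ∈ J := by
      rw [hJmem]
      refine ⟨0, (hint _ _).2 ⟨by simpa using isIntegral_zero, ?_⟩⟩
      rw [show (0 : K) ^ 2 - δ * (v : K) ^ 2 = - (u * v) by rw [← hδv]; ring]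
      exact (u.isIntegral_coe.mul v.isIntegral_coe).neg
    rw [h, FractionalIdeal.mem_zero_iff] at this
    exact hv0 this
  have hρ : ∀ w ∈ J * J⁻¹, ∃ ρ : K, ∀ y ∈ J, IsIntegral ℤ (am y * (am ρ + am w * r)) := by
    intro w hw
    refine FractionalIdeal.mul_induction_on hw ?_ ?_
    · rintro j ⟨x, hx⟩ m hm
      refine ⟨m * x, fun y hy => ?_⟩
      have h1 : IsIntegral ℤ (m * y) := by
        rw [← mem_one_iff_int]
        exact (FractionalIdeal.mem_inv_iff hJ0).1 hm y hy
      have h2 : IsIntegral ℤ (am (m * y)) := h1.algebraMap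
      have := h2.mul hx
      rwa [show am (m * y) * (am x + am j * r) = am y * (am (m * x) + am (j * m) * r) by
        simp only [map_mul]; ring] at this
    · rintro w w' ⟨ρ, h⟩ ⟨ρ', h'⟩
      refine ⟨ρ + ρ', fun y hy => ?_⟩
      have := (h y hy).add (h' y hy)
      rwa [show am y * (am ρ + am w * r) + am y * (am ρ' + am w' * r) =
        am y * (am (ρ + ρ') + am (w + w') * r) by simp only [map_add]; ring] at this
  obtain ⟨ρ, hρ⟩ := hρ 1 (by
    rw [mul_inv_cancel₀ hJ0]; exact (mem_one_iff_int 1).2 isIntegral_one)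
  have hρ : ∀ y ∈ J, IsIntegral ℤ (am y * (am ρ + r)) := by simpa using hρ
  have hJchar : ∀ z : L, IsIntegral ℤ z ↔ ∃ a : 𝓞 K, ∃ y ∈ J,
      z = algebraMap K L a + algebraMap K L y * (algebraMap K L ρ + r) := by
    intro z
    constructor
    · intro hz
      obtain ⟨x, y, rfl⟩ := exists_coords hfr r (sqrt_not_mem r δ hδ hr) z
      have hy : y ∈ J := ⟨x, hz⟩
      have h1 := hz.sub (hρ y hy)
      rw [show algebraMap K L x + algebraMap K L y * r - am y * (am ρ + r) = am (x - y * ρ) by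
        simp only [map_sub, map_mul, am]; ring] at h1
      have h2 := (isIntegral_algebraMap_iff (algebraMap K L).injective).1 h1
      refine ⟨⟨_, h2⟩, y, hy, ?_⟩
      change _ = algebraMap K L (x - y * ρ) + _
      simp only [map_sub, map_mul]; ring
    · rintro ⟨a, y, hy, rfl⟩
      exact (hO a).add (hρ y hy)
  have hdisc := disc_formula hfr r δ hδ hr (Units.mk0 J hJ0) ρ hJchar
  simp only [Units.val_mk0] at hdisc
  let h2 : FractionalIdeal (𝓞 K)⁰ K := FractionalIdeal.spanSingleton _ (2 : K)
  have h20 : h2 ≠ 0 := FractionalIdeal.spanSingleton_ne_zero_iff.2 two_ne_zero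
  have hG0 : (h2 * J)⁻¹ ≠ 0 := inv_ne_zero (mul_ne_zero h20 hJ0)
  have hmem2 : ∀ s, s ∈ h2 * J ↔ s / 2 ∈ J := by
    intro s
    rw [FractionalIdeal.mem_singleton_mul]
    constructor
    · rintro ⟨y, hy, rfl⟩
      simpa using hy
    · intro h
      exact ⟨s / 2, h, by field_simp⟩
  refine ⟨(h2 * J)⁻¹, hG0, ?_, ?_⟩
  · intro q hq
    have hle : (h2 * J)⁻¹ ≤ q ↔ q⁻¹ ≤ h2 * J := by
      constructor
      · intro h
        have := FractionalIdeal.inv_anti_mono hG0 hq h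
        rwa [inv_inv] at this
      · intro h
        have := FractionalIdeal.inv_anti_mono (inv_ne_zero hq) (mul_ne_zero h20 hJ0) h
        rwa [inv_inv] at this
    rw [hle]
    constructor
    · rintro ⟨σ, hσ, hc⟩ s hs
      have hs : s ∈ q⁻¹ := hs
      change s ∈ h2 * J
      rw [hmem2, hJmem]
      refine ⟨s * σ / 2, (hint _ _).2 ⟨?_, ?_⟩⟩
      · rw [← mem_one_iff_int, show 2 * (s * σ / 2) = s * σ by ring]
        exact (FractionalIdeal.mem_inv_iff hq).1 hs σ hσ
      · rw [← mem_one_iff_int, show (s * σ / 2) ^ 2 - δ * (s / 2) ^ 2 =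
          (s * s) * (-((δ - σ ^ 2) / 4)) by ring]
        have : (s * s) * (-((δ - σ ^ 2) / 4)) ∈ (q⁻¹ * q⁻¹) * (q * q) :=
          FractionalIdeal.mul_mem_mul (FractionalIdeal.mul_mem_mul hs hs)
            ((Submodule.neg_mem_iff _).2 hc)
        rwa [show q⁻¹ * q⁻¹ * (q * q) = 1 by field_simp] at this
    · intro h
      have hS : ∀ s ∈ q⁻¹, IsIntegral ℤ (am (s / 2) * (am ρ + r)) := by
        intro s hs
        exact hρ _ ((hmem2 s).1 (h hs))
      have hS2 : ∀ s ∈ q⁻¹, IsIntegral ℤ (s * ρ) := by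
        intro s hs
        have := hS s hs
        rw [show am (s / 2) * (am ρ + r) = am (s / 2 * ρ) + am (s / 2) * r by
          simp only [map_mul]; ring] at this
        have := ((hint _ _).1 this).1
        rwa [show 2 * (s / 2 * ρ) = s * ρ by ring] at this
      refine ⟨ρ, ?_, ?_⟩
      · rw [← inv_inv q, FractionalIdeal.mem_inv_iff (inv_ne_zero hq)]
        intro s hs
        rw [mem_one_iff_int, mul_comm]
        exact hS2 s hs
      · rw [← inv_inv (q * q), FractionalIdeal.mem_inv_iff (inv_ne_zero (mul_ne_zero hq hq)),
          mul_inv]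
        intro w hw
        refine FractionalIdeal.mul_induction_on hw ?_ ?_
        · intro s hs s' hs'
          rw [mem_one_iff_int]
          have h1 := (hS s hs).mul (((hS2 s' hs').algebraMap (B := L)).sub (hS s' hs'))
          rw [show am (s / 2) * (am ρ + r) * (algebraMap K L (s' * ρ) - am (s' / 2) * (am ρ + r))
            = am (-((δ - ρ ^ 2) / 4 * (s * s'))) by
              simp only [map_mul, map_sub, map_pow, map_ofNat, map_div₀, am, map_neg, ← hr]
              field_simp
              ring] at h1
          have h2 := (isIntegral_algebraMap_iff (algebraMap K L).injective).1 h1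
          simpa using h2.neg
        · intro w w' h h'
          rw [mul_add]
          exact Submodule.add_mem _ h h'
  · rw [hdisc, map_inv₀, map_mul, FractionalIdeal.absNorm_span_singleton]
    have hN2 : Algebra.norm ℚ (2 : K) = 2 ^ finrank ℚ K := by
      have := Algebra.norm_algebraMap (R := ℚ) (S := K) 2
      simpa using this
    have hJn : FractionalIdeal.absNorm J ≠ 0 := by
      rwa [Ne, FractionalIdeal.absNorm_eq_zero_iff]
    rw [hN2, abs_of_nonneg (a := (2:ℚ) ^ finrank ℚ K) (by positivity), show (4:ℚ) = 2 ^ 2 by norm_num, ← pow_mul,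
      mul_comm 2, pow_mul]
    field_simp
end PartE2

section PartA0
open NumberField Filter Module
open scoped nonZeroDivisors Topology

theorem summable_absNorm_neg_two (K : Type*) [Field K] [NumberField K] :
    Summable (fun I : {I : Ideal (𝓞 K) // I ≠ ⊥} => ((Ideal.absNorm I.1 : ℝ)) ^ (-2 : ℤ)) := by
  classical
  have h1 : LSeriesSummable (fun n ↦ ((Nat.card {I : Ideal (𝓞 K) // Ideal.absNorm I = n} : ℝ) : ℂ))
      (2 : ℂ) := by
    refine LSeriesSummable_of_sum_norm_bigO_and_nonneg (r := 1) ?_ (fun n => by positivity)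
      zero_le_one (by norm_num)
    have := ((Ideal.tendsto_norm_le_div_atTop₀ K).comp tendsto_natCast_atTop_atTop)
    have h2 := this.isBigO_one ℝ
    have h3 := h2.mul (Asymptotics.isBigO_refl (fun n : ℕ => (n : ℝ)) atTop)
    refine (Asymptotics.IsBigO.congr' h3 ?_ ?_)
    · filter_upwards [eventually_gt_atTop 0] with n hn
      have hn' : (n : ℝ) ≠ 0 := by positivity
      simp only [Function.comp_apply]
      rw [div_mul_cancel₀ _ hn']
      simp only [Nat.cast_le, ← Nat.cast_sum]
      congr 1
      rw [← add_left_inj 1, ← Ideal.card_norm_le_eq_card_norm_le_add_one,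
        show Finset.Icc 1 n = Finset.Ioc 0 n from Finset.Icc_succ_left_eq_Ioc _ _,
        show 1 = Nat.card {I : Ideal (𝓞 K) // Ideal.absNorm I = 0} by
          simp [Ideal.absNorm_eq_zero_iff],
        Finset.sum_Ioc_add_eq_sum_Icc (n.zero_le),
        ← Finset.card_preimage_eq_sum_card_image_eq
          (fun k _ ↦ Ideal.finite_setOfPred_absNorm_eq k)]
      simp [Set.coe_eq_subtype]
    · filter_upwards with n
      simp
  have h2 : Summable (fun n : ℕ =>
      (Nat.card {I : Ideal (𝓞 K) // Ideal.absNorm I = n} : ℝ) * (n : ℝ) ^ (-2 : ℤ)) := by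
    have := h1.norm
    refine this.congr fun n => ?_
    rw [LSeries.norm_term_eq]
    split_ifs with h
    · simp [h]
    · simp [zpow_neg, div_eq_mul_inv]
  have h3 : Summable (fun I : Ideal (𝓞 K) => ((Ideal.absNorm I : ℝ)) ^ (-2 : ℤ)) := by
    rw [← (Equiv.sigmaFiberEquiv (fun I : Ideal (𝓞 K) => Ideal.absNorm I)).summable_iff,
      summable_sigma_of_nonneg (fun x => by simp only [Function.comp]; positivity)]
    have hf : ∀ n : ℕ, Finite {I : Ideal (𝓞 K) // Ideal.absNorm I = n} := fun n =>
      Ideal.finite_setOfPred_absNorm_eq n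
    constructor
    · intro n
      exact Summable.of_finite (β := {I : Ideal (𝓞 K) // Ideal.absNorm I = n})
    · refine h2.congr fun n => ?_
      have : ∀ y : {I : Ideal (𝓞 K) // Ideal.absNorm I = n},
          ((fun I : Ideal (𝓞 K) => ((Ideal.absNorm I : ℝ)) ^ (-2 : ℤ)) ∘
          (Equiv.sigmaFiberEquiv (fun I : Ideal (𝓞 K) => Ideal.absNorm I))) ⟨n, y⟩ =
            (n : ℝ) ^ (-2 : ℤ) := by
        intro y
        simp [y.2]
      simp_rw [this]
      rw [tsum_const, nsmul_eq_mul]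
  exact h3.comp_injective Subtype.val_injective

/-- pairs -/
def PS {K : Type*} [Field K] [NumberField K] {Q : Type*} (w : Q → ℝ)
    (S : Finset (Ideal (𝓞 K))) (X : ℝ) : Set (Q × {I : Ideal (𝓞 K) // I ≠ ⊥}) :=
  {x | w x.1 * (Ideal.absNorm x.2.1 : ℝ) ^ 2 ≤ X ∧ ∀ P ∈ S, ¬ P ∣ x.2.1}

theorem PS_step {K : Type*} [Field K] [NumberField K] {Q : Type*} (w : Q → ℝ)
    (S : Finset (Ideal (𝓞 K))) [DecidableEq (Ideal (𝓞 K))]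
    (hS : ∀ P ∈ S, Prime P) (P : Ideal (𝓞 K)) (hP : Prime P) (hPS : P ∉ S)
    (X : ℝ) (hfin : (PS w S X).Finite) :
    (PS w (insert P S) X).ncard + (PS w S (X / (Ideal.absNorm P : ℝ) ^ 2)).ncard =
      (PS w S X).ncard := by
  let f : Q × {I : Ideal (𝓞 K) // I ≠ ⊥} → Q × {I : Ideal (𝓞 K) // I ≠ ⊥} :=
    fun x => (x.1, ⟨P * x.2.1, mul_ne_zero hP.ne_zero x.2.2⟩)
  have hf : Function.Injective f := by
    rintro ⟨q, I⟩ ⟨q', I'⟩ h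
    simp only [f, Prod.mk.injEq, Subtype.mk.injEq] at h
    obtain ⟨h1, h2⟩ := h
    exact Prod.ext h1 (Subtype.ext (mul_left_cancel₀ hP.ne_zero h2))
  have hN : (0 : ℝ) < (Ideal.absNorm P : ℝ) ^ 2 := by
    have : Ideal.absNorm P ≠ 0 := by rw [Ne, Ideal.absNorm_eq_zero_iff]; exact hP.ne_zero
    positivity
  have hu : PS w S X = PS w (insert P S) X ∪ f '' (PS w S (X / (Ideal.absNorm P : ℝ) ^ 2)) := by
    ext ⟨q, I, hI⟩
    simp only [PS, Set.mem_setOf_eq, Set.mem_union, Set.mem_image, Finset.mem_insert]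
    constructor
    · rintro ⟨h1, h2⟩
      by_cases h : P ∣ I
      · right
        obtain ⟨J, rfl⟩ := h
        refine ⟨(q, ⟨J, right_ne_zero_of_mul hI⟩), ⟨?_, ?_⟩, rfl⟩
        · rw [le_div_iff₀ hN]
          rw [map_mul] at h1
          push_cast at h1
          linarith
        · intro P' hP' hd
          exact h2 P' hP' (hd.mul_left _)
      · left
        refine ⟨h1, ?_⟩
        rintro P' (rfl | hP')
        · exact h
        · exact h2 P' hP'
    · rintro (⟨h1, h2⟩ | ⟨⟨q', I', hI'⟩, ⟨h1, h2⟩, h3⟩)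
      · exact ⟨h1, fun P' hP' => h2 P' (Or.inr hP')⟩
      · simp only [f, Prod.mk.injEq, Subtype.mk.injEq] at h3
        obtain ⟨rfl, rfl⟩ := h3
        refine ⟨?_, ?_⟩
        · rw [le_div_iff₀ hN] at h1
          rw [map_mul]
          push_cast
          simp only at h1
          linarith
        · intro P' hP' hd
          rcases (hS P' hP').dvd_or_dvd hd with hd | hd
          · have : P' = P := associated_iff_eq.1 ((hS P' hP').associated_of_dvd hP hd)
            exact hPS (this ▸ hP')
          · exact h2 P' hP' hd
  have hd : Disjoint (PS w (insert P S) X) (f '' (PS w S (X / (Ideal.absNorm P : ℝ) ^ 2))) := by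
    rw [Set.disjoint_left]
    rintro _ h ⟨⟨q, I⟩, h2, rfl⟩
    exact h.2 P (Finset.mem_insert_self _ _) (Dvd.intro _ rfl)
  rw [hu] at hfin ⊢
  rw [Set.ncard_union_eq hd (hfin.subset Set.subset_union_left)
    (hfin.subset Set.subset_union_right), Set.ncard_image_of_injective _ hf]

open Classical in
/-- partial zeta -/
noncomputable def ZS (K : Type*) [Field K] [NumberField K] (S : Finset (Ideal (𝓞 K))) : ℝ :=
  ∑' I : {I : Ideal (𝓞 K) // I ≠ ⊥}, if (∀ P ∈ S, ¬ P ∣ I.1) then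
    ((Ideal.absNorm I.1 : ℝ)) ^ (-2 : ℤ) else 0

open Classical in
theorem ZS_summable (K : Type*) [Field K] [NumberField K] (S : Finset (Ideal (𝓞 K))) :
    Summable (fun I : {I : Ideal (𝓞 K) // I ≠ ⊥} => if (∀ P ∈ S, ¬ P ∣ I.1) then
    ((Ideal.absNorm I.1 : ℝ)) ^ (-2 : ℤ) else 0) := by
  refine Summable.of_nonneg_of_le (fun I => ?_) (fun I => ?_) (summable_absNorm_neg_two K)
  · split_ifs <;> positivity
  · split_ifs
    · exact le_rfl
    · positivity

theorem ZS_step (K : Type*) [Field K] [NumberField K] 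
    (S : Finset (Ideal (𝓞 K))) [DecidableEq (Ideal (𝓞 K))]
    (hS : ∀ P ∈ S, Prime P) (P : Ideal (𝓞 K)) (hP : Prime P) (hPS : P ∉ S) :
    ZS K (insert P S) = ZS K S * (1 - (Ideal.absNorm P : ℝ) ^ (-2 : ℤ)) := by
  classical
  let f : {I : Ideal (𝓞 K) // I ≠ ⊥} → {I : Ideal (𝓞 K) // I ≠ ⊥} :=
    fun x => ⟨P * x.1, mul_ne_zero hP.ne_zero x.2⟩
  have hf : Function.Injective f := by
    rintro I I' h
    simp only [f, Subtype.mk.injEq] at h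
    exact (Subtype.ext (mul_left_cancel₀ hP.ne_zero h))
  let g : Finset (Ideal (𝓞 K)) → {I : Ideal (𝓞 K) // I ≠ ⊥} → ℝ := fun S I =>
    if (∀ P ∈ S, ¬ P ∣ I.1) then ((Ideal.absNorm I.1 : ℝ)) ^ (-2 : ℤ) else 0
  have hg : ∀ S, ZS K S = ∑' I, g S I := fun S => rfl
  have hgs : ∀ S, Summable (g S) := fun S => ZS_summable K S
  let k : {I : Ideal (𝓞 K) // I ≠ ⊥} → ℝ := fun I => if P ∣ I.1 then g S I else 0
  have hk : Function.support k ⊆ Set.range f := by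
    intro I hI
    by_cases h : P ∣ I.1
    · obtain ⟨J, hJ⟩ := h
      refine ⟨⟨J, ?_⟩, Subtype.ext hJ.symm⟩
      intro h0
      apply I.2
      rw [hJ, h0, Ideal.mul_bot]
    · simp [k, h] at hI
  have hks : Summable k := by
    refine Summable.of_nonneg_of_le (fun I => ?_) (fun I => ?_) (hgs S)
    · simp only [k, g]; split_ifs <;> positivity
    · simp only [k]; split_ifs
      · exact le_rfl
      · simp only [g]; split_ifs <;> positivity
  have hk1 : ∑' I, k I = (Ideal.absNorm P : ℝ) ^ (-2 : ℤ) * ZS K S := by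
    rw [← hf.tsum_eq hk, hg, ← tsum_mul_left]
    congr 1
    ext I
    have h0 : P ∣ (f I).1 := Dvd.intro _ rfl
    have h1 : (∀ P' ∈ S, ¬ P' ∣ (f I).1) ↔ (∀ P' ∈ S, ¬ P' ∣ I.1) := by
      refine forall₂_congr fun P' hP' => not_congr ⟨fun hd => ?_, fun hd => hd.mul_left _⟩
      rcases (hS P' hP').dvd_or_dvd hd with hd | hd
      · have : P' = P := associated_iff_eq.1 ((hS P' hP').associated_of_dvd hP hd)
        exact absurd (this ▸ hP') hPS
      · exact hd
    simp only [k, g, if_pos h0, h1]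
    split_ifs
    · simp only [f, map_mul, Nat.cast_mul, mul_zpow]
    · simp
  have hk2 : ∀ I, g (insert P S) I = g S I - k I := by
    intro I
    simp only [k, g, Finset.mem_insert]
    by_cases h : P ∣ I.1
    · rw [if_neg, if_pos h, sub_self]
      intro h'; exact h' P (Or.inl rfl) h
    · rw [if_neg h, sub_zero]
      congr 1
      refine propext ⟨fun h' P' hP' => h' P' (Or.inr hP'), fun h' P' hP' => ?_⟩
      rcases hP' with rfl | hP'
      · exact h
      · exact h' P' hP'
  rw [hg]
  simp_rw [hk2]
  rw [(hgs S).tsum_sub hks, hk1, ← hg]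
  ring
end PartA0

section PartA1
open NumberField Filter Module
open scoped nonZeroDivisors Topology

theorem PS_subset {K : Type*} [Field K] [NumberField K] {Q : Type*} (w : Q → ℝ)
    (S : Finset (Ideal (𝓞 K))) (X : ℝ) : PS w S X ⊆ PS (K := K) w ∅ X :=
  fun x hx => ⟨hx.1, by simp⟩

theorem ZS_empty_ge (K : Type*) [Field K] [NumberField K] (S : Finset (Ideal (𝓞 K)))
    (hS : ∀ P ∈ S, Prime P) : 1 ≤ ZS K S := by
  classical
  have := (ZS_summable K S).le_tsum ⟨⊤, top_ne_bot⟩ (fun I _ => by split_ifs <;> positivity)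
  rw [if_pos] at this
  · refine le_trans (le_of_eq ?_) this
    simp
  · intro P hP hd
    have := isUnit_of_dvd_one (a := P) (by simpa using hd)
    exact (hS P hP).not_unit this

theorem PS_tendsto {K : Type*} [Field K] [NumberField K] {Q : Type*} (w : Q → ℝ) (c : ℝ)
    (hfin : ∀ X, (PS (K := K) w ∅ X).Finite)
    (hlim : Tendsto (fun X : ℝ => ((PS (K := K) w ∅ X).ncard : ℝ) / X) atTop (𝓝 c))
    (S : Finset (Ideal (𝓞 K))) (hS : ∀ P ∈ S, Prime P) :
    Tendsto (fun X : ℝ => ((PS w S X).ncard : ℝ) / X) atTop (𝓝 (c * (ZS K S / ZS K ∅))) := by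
  classical
  induction S using Finset.induction_on with
  | empty =>
    have := ZS_empty_ge K ∅ (by simp)
    rwa [div_self (by positivity), mul_one]
  | insert P S hPS ih =>
    have hS' : ∀ P ∈ S, Prime P := fun P' hP' => hS P' (Finset.mem_insert_of_mem hP')
    have hP := hS P (Finset.mem_insert_self _ _)
    have ih := ih hS'
    have hN : (0 : ℝ) < (Ideal.absNorm P : ℝ) ^ 2 := by
      have : Ideal.absNorm P ≠ 0 := by rw [Ne, Ideal.absNorm_eq_zero_iff]; exact hP.ne_zero
      positivity
    have h2 := (ih.comp (tendsto_id.atTop_div_const hN)).mul_const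
      (((Ideal.absNorm P : ℝ) ^ 2)⁻¹)
    have h3 := ih.sub h2
    rw [ZS_step K S hS' P hP hPS]
    convert h3 using 1
    · ext X
      have := PS_step w S hS' P hP hPS X ((hfin X).subset (PS_subset w S X))
      rw [← this]
      simp only [Function.comp, id]
      push_cast
      have hN0 : (Ideal.absNorm P : ℝ) ≠ 0 := fun h => by simp [h] at hN
      by_cases hX : X = 0
      · simp [hX]
      field_simp
      ring
    · rw [zpow_neg]
      congr 1
      norm_cast
      ring

theorem ZS_small (K : Type*) [Field K] [NumberField K] (ε : ℝ) (hε : 0 < ε) :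
    ∃ S : Finset (Ideal (𝓞 K)), (∀ P ∈ S, Prime P) ∧ ZS K S < 1 + ε := by
  classical
  have hs := summable_absNorm_neg_two K
  obtain ⟨F, hF⟩ := (Filter.Tendsto.eventually_const_lt (sub_lt_self _ hε) hs.hasSum).exists
  have hex : ∀ I : Ideal (𝓞 K), ∃ P : Ideal (𝓞 K), I ≠ ⊥ → I ≠ ⊤ → Prime P ∧ P ∣ I := by
    intro I
    by_cases h0 : I = ⊥
    · exact ⟨⊥, fun h => absurd h0 h⟩
    by_cases h1 : I = ⊤
    · exact ⟨⊥, fun _ h => absurd h1 h⟩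
    obtain ⟨P, hP, hd⟩ := WfDvdMonoid.exists_irreducible_factor (a := I)
      (by rwa [Ideal.isUnit_iff]) h0
    exact ⟨P, fun _ _ => ⟨hP.prime, hd⟩⟩
  choose p hp using hex
  let S : Finset (Ideal (𝓞 K)) := (F.filter (fun I => I.1 ≠ ⊤)).image (fun I => p I.1)
  have hS : ∀ P ∈ S, Prime P := by
    intro P hP
    simp only [S, Finset.mem_image, Finset.mem_filter] at hP
    obtain ⟨I, ⟨_, hI⟩, rfl⟩ := hP
    exact (hp I.1 I.2 hI).1
  refine ⟨S, hS, ?_⟩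
  let one : {I : Ideal (𝓞 K) // I ≠ ⊥} := ⟨⊤, top_ne_bot⟩
  let F' := F.erase one
  -- sum of ZS terms ≤ 1 + sum outside F
  have h1 : ∀ I : {I : Ideal (𝓞 K) // I ≠ ⊥},
      (if (∀ P ∈ S, ¬ P ∣ I.1) then ((Ideal.absNorm I.1 : ℝ)) ^ (-2 : ℤ) else 0) ≤
      (if I = one then 1 else 0) + (((Ideal.absNorm I.1 : ℝ)) ^ (-2 : ℤ) -
        (if I ∈ F then ((Ideal.absNorm I.1 : ℝ)) ^ (-2 : ℤ) else 0)) := by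
    intro I
    by_cases hI : I = one
    · subst hI
      simp only [one]
      simp
      split_ifs <;> simp
    · rw [if_neg hI]
      by_cases hIF : I ∈ F
      · rw [if_pos hIF, if_neg]
        · simp
        · intro h
          have hI' : I.1 ≠ ⊤ := fun h => hI (Subtype.ext h)
          refine h (p I.1) ?_ (hp I.1 I.2 hI').2
          exact Finset.mem_image.2 ⟨I, Finset.mem_filter.2 ⟨hIF, hI'⟩, rfl⟩
      · rw [if_neg hIF]
        split_ifs
        · simp
        · simp
  have hA : HasSum (fun I : {I : Ideal (𝓞 K) // I ≠ ⊥} => if I = one then (1:ℝ) else 0) 1 :=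
    hasSum_ite_eq one 1
  have hB : HasSum (fun I : {I : Ideal (𝓞 K) // I ≠ ⊥} =>
      if I ∈ F then ((Ideal.absNorm I.1 : ℝ)) ^ (-2 : ℤ) else 0)
      (∑ I ∈ F, ((Ideal.absNorm I.1 : ℝ)) ^ (-2 : ℤ)) := by
    have := hasSum_sum_of_ne_finset_zero (f := fun I : {I : Ideal (𝓞 K) // I ≠ ⊥} =>
      if I ∈ F then ((Ideal.absNorm I.1 : ℝ)) ^ (-2 : ℤ) else 0) (s := F)
      (L := SummationFilter.unconditional _) (fun b hb => by simp [hb])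
    rwa [Finset.sum_congr rfl (fun x hx => if_pos hx)] at this
  have := hasSum_le h1 (ZS_summable K S).hasSum (hA.add (hs.hasSum.sub hB))
  change ZS K S ≤ _ at this
  linarith

theorem sieve {K : Type*} [Field K] [NumberField K] {Q : Type*} (w : Q → ℝ) (c : ℝ)
    (w0 : ℝ) (hw0 : 0 < w0) (hw : ∀ q, w0 ≤ w q)
    (hfin : ∀ X, (PS (K := K) w ∅ X).Finite)
    (hlim : Tendsto (fun X : ℝ => ((PS (K := K) w ∅ X).ncard : ℝ) / X) atTop (𝓝 c)) :
    Tendsto (fun X : ℝ => ({q | w q ≤ X}.ncard : ℝ) / X) atTop (𝓝 (c / ZS K ∅)) := by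
  classical
  let one : {I : Ideal (𝓞 K) // I ≠ ⊥} := ⟨⊤, top_ne_bot⟩
  let a : ℝ → ℝ := fun X => ({q | w q ≤ X}.ncard : ℝ)
  have ha0 : ∀ X, 0 ≤ a X := fun X => Nat.cast_nonneg _
  have hinj : ∀ I : {I : Ideal (𝓞 K) // I ≠ ⊥}, Function.Injective (fun q : Q => (q, I)) :=
    fun I q q' h => (Prod.mk.inj h).1
  have hsub1 : ∀ (S : Finset (Ideal (𝓞 K))) (_ : ∀ P ∈ S, Prime P) X,
      (fun q : Q => (q, one)) '' {q | w q ≤ X} ⊆ PS w S X := by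
    rintro S hS X _ ⟨q, hq, rfl⟩
    refine ⟨by simpa [one] using hq, ?_⟩
    intro P hP hd
    exact (hS P hP).not_unit (isUnit_of_dvd_one (a := P) (by simpa using hd))
  have hfina : ∀ X, {q | w q ≤ X}.Finite := fun X =>
    Set.Finite.of_finite_image ((hfin X).subset (hsub1 ∅ (by simp) X)) (hinj one).injOn
  -- linear bound
  obtain ⟨C, hC0, hC⟩ : ∃ C, 0 < C ∧ ∀ X, a X ≤ C * max X 0 := by
    have hev := Filter.Tendsto.eventually_lt_const (lt_add_one c) hlim
    obtain ⟨X0, hX0⟩ := eventually_atTop.1 (hev.and (eventually_ge_atTop 1))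
    have hX1 := (hX0 X0 le_rfl).2
    have hmono : ∀ X Y, X ≤ Y → a X ≤ a Y := fun X Y h =>
      Nat.cast_le.2 (Set.ncard_le_ncard (fun q hq => le_trans (α := ℝ) hq h) (hfina Y))
    have haA : ∀ X, a X ≤ (PS (K := K) w ∅ X).ncard := fun X => by
      simp only [a]
      rw [← Set.ncard_image_of_injective _ (hinj one)]
      exact Nat.cast_le.2 (Set.ncard_le_ncard (hsub1 ∅ (by simp) X) (hfin X))
    refine ⟨max (c + 1) 1 + a X0 / w0, ?_, fun X => ?_⟩
    · have := ha0 X0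
      positivity
    · by_cases hX : X0 ≤ X
      · have h1 := (hX0 X hX).1
        have hXp : 0 < X := by linarith
        rw [div_lt_iff₀ hXp] at h1
        rw [max_eq_left hXp.le, add_mul]
        have h2 := haA X
        have h3 : (c + 1) * X ≤ max (c + 1) 1 * X := by gcongr; exact le_max_left _ _
        have h4 : 0 ≤ a X0 / w0 * X := by have := ha0 X0; positivity
        linarith
      · push Not at hX
        by_cases hX2 : X < w0
        · have : {q | w q ≤ X} = ∅ := by
            ext q; simp only [Set.mem_setOf_eq, Set.mem_empty_iff_false, iff_false, not_le]
            exact hX2.trans_le (hw q)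
          simp only [a, this, Set.ncard_empty, Nat.cast_zero]
          have := ha0 X0
          positivity
        · push Not at hX2
          have hXp : 0 < X := by linarith
          rw [max_eq_left hXp.le, add_mul]
          have h1 := hmono X X0 hX.le
          have h2 : a X0 ≤ a X0 / w0 * X := by
            rw [div_mul_eq_mul_div, le_div_iff₀ hw0]
            exact mul_le_mul_of_nonneg_left hX2 (ha0 _)
          have h3 : 0 ≤ max (c + 1) 1 * X := by positivity
          linarith
  have hkey : ∀ (S : Finset (Ideal (𝓞 K))) (_ : ∀ P ∈ S, Prime P) X, 0 < X →
      ((PS w S X).ncard : ℝ) ≤ a X + C * X * (ZS K S - 1) := by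
    intro S hS X hX
    let T : Finset (Q × {I : Ideal (𝓞 K) // I ≠ ⊥}) :=
      ((hfin X).subset (PS_subset w S X)).toFinset
    have hT : ∀ x, x ∈ T ↔ x ∈ PS w S X := fun x => by simp [T]
    have hTc : ((PS w S X).ncard : ℝ) = T.card := by
      rw [Set.ncard_eq_toFinset_card _ ((hfin X).subset (PS_subset w S X))]
    let z : {I : Ideal (𝓞 K) // I ≠ ⊥} → ℝ := fun I => if (∀ P ∈ S, ¬ P ∣ I.1) then
      ((Ideal.absNorm I.1 : ℝ)) ^ (-2 : ℤ) else 0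
    have hz : Summable z := ZS_summable K S
    have hz0 : ∀ I, 0 ≤ z I := fun I => by simp only [z]; split_ifs <;> positivity
    have hzone : z one = 1 := by
      simp only [z]
      rw [if_pos]
      · simp [one]
      · intro P hP hd
        exact (hS P hP).not_unit (isUnit_of_dvd_one (a := P) (by simpa [one] using hd))
    have hfib : ∀ I ∈ T.image Prod.snd, ((T.filter (fun x => x.2 = I)).card : ℝ) ≤
        (if I = one then a X else 0) + C * X * (z I - if I = one then 1 else 0) := by
      intro I hI
      obtain ⟨x, hx, rfl⟩ := Finset.mem_image.1 hI
      set I := x.2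
      have hIS : ∀ P ∈ S, ¬ P ∣ I.1 := ((hT x).1 hx).2
      have hNpos : (0 : ℝ) < (Ideal.absNorm I.1 : ℝ) ^ 2 := by
        have : Ideal.absNorm I.1 ≠ 0 := by
          rw [Ne, Ideal.absNorm_eq_zero_iff]; exact I.2
        positivity
      have h1 : ((T.filter (fun x => x.2 = I)).card : ℝ) ≤
          a (X / (Ideal.absNorm I.1 : ℝ) ^ 2) := by
        simp only [a]
        rw [← Set.ncard_image_of_injective _ (hinj I), ← Set.ncard_coe_finset]
        refine Nat.cast_le.2 (Set.ncard_le_ncard ?_ ((hfina _).image _))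
        rintro ⟨q, J⟩ hy
        rw [Finset.mem_coe, Finset.mem_filter] at hy
        obtain ⟨hy1, rfl : J = I⟩ := hy
        refine ⟨q, ?_, rfl⟩
        have := ((hT _).1 hy1).1
        simp only [Set.mem_setOf_eq]
        rwa [le_div_iff₀ hNpos]
      by_cases h : I = one
      · rw [if_pos h, if_pos h, h, hzone]
        rw [h] at h1
        simpa [one] using h1
      · rw [if_neg h, if_neg h]
        refine h1.trans ((hC _).trans ?_)
        rw [max_eq_left (by positivity)]
        simp only [z, if_pos hIS]
        rw [zpow_neg]
        apply le_of_eq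
        norm_cast
        field_simp
        ring
    rw [hTc, Finset.card_eq_sum_card_image Prod.snd T]
    push_cast
    refine (Finset.sum_le_sum hfib).trans ?_
    rw [Finset.sum_add_distrib, ← Finset.mul_sum]
    have h1 : (∑ I ∈ T.image Prod.snd, if I = one then a X else 0) ≤ a X := by
      rw [Finset.sum_ite_eq']
      split_ifs
      · exact le_rfl
      · exact ha0 X
    have h2 : (∑ I ∈ T.image Prod.snd, (z I - if I = one then 1 else 0)) ≤ ZS K S - 1 := by
      have hs : HasSum (fun I => z I - if I = one then (1:ℝ) else 0) (ZS K S - 1) :=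
        hz.hasSum.sub (hasSum_ite_eq one 1)
      refine sum_le_hasSum _ (fun I _ => ?_) hs
      by_cases h : I = one
      · rw [if_pos h, h, hzone, sub_self]
      · rw [if_neg h, sub_zero]; exact hz0 I
    have h3 : 0 ≤ C * X := by positivity
    nlinarith [mul_le_mul_of_nonneg_left h2 h3]
  have hkey2 : ∀ (S : Finset (Ideal (𝓞 K))) (_ : ∀ P ∈ S, Prime P) X,
      a X ≤ (PS w S X).ncard := by
    intro S hS X
    simp only [a]
    rw [← Set.ncard_image_of_injective _ (hinj one)]
    exact Nat.cast_le.2 (Set.ncard_le_ncard (hsub1 S hS X)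
      ((hfin X).subset (PS_subset w S X)))
  have hζ := ZS_empty_ge K ∅ (by simp)
  rw [Metric.tendsto_atTop']
  intro ε hε
  obtain ⟨S, hS, hSε⟩ := ZS_small K (min (ε / (3 * C)) (ε / (3 * (|c| + 1))))
    (by have := abs_nonneg c; positivity)
  have hS1 := ZS_empty_ge K S hS
  have hlS := PS_tendsto w c hfin hlim S hS
  rw [Metric.tendsto_atTop'] at hlS
  obtain ⟨X1, hX1⟩ := hlS (ε / 3) (by positivity)
  refine ⟨max X1 0, fun X hX => ?_⟩
  have hXp : 0 < X := (le_max_right _ _).trans_lt hX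
  have h1 := hX1 X ((le_max_left _ _).trans_lt hX)
  have h2 := hkey S hS X hXp
  have h3 := hkey2 S hS X
  rw [Real.dist_eq] at h1 ⊢
  have e1 : C * (ZS K S - 1) ≤ ε / 3 := by
    have : ZS K S - 1 ≤ ε / (3 * C) := by
      have := min_le_left (ε / (3 * C)) (ε / (3 * (|c| + 1))); linarith
    calc C * (ZS K S - 1) ≤ C * (ε / (3 * C)) := by gcongr
      _ = ε / 3 := by field_simp
  have e2 : |c * (ZS K S / ZS K ∅) - c / ZS K ∅| < ε / 3 := by
    rw [show c * (ZS K S / ZS K ∅) - c / ZS K ∅ = c * (ZS K S - 1) / ZS K ∅ by ring,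
      abs_div, abs_mul, abs_of_nonneg (sub_nonneg.2 hS1), abs_of_pos (by linarith : 0 < ZS K ∅),
      div_lt_iff₀ (by linarith)]
    have hc := abs_nonneg c
    have : ZS K S - 1 < ε / (3 * (|c| + 1)) := by
      have := min_le_right (ε / (3 * C)) (ε / (3 * (|c| + 1))); linarith
    calc |c| * (ZS K S - 1) ≤ (|c| + 1) * (ZS K S - 1) := by gcongr; linarith
      _ < (|c| + 1) * (ε / (3 * (|c| + 1))) := by gcongr
      _ = ε / 3 * 1 := by field_simp
      _ ≤ ε / 3 * ZS K ∅ := by gcongr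
  have e3 : |a X / X - ((PS w S X).ncard : ℝ) / X| ≤ ε / 3 := by
    rw [← sub_div, abs_div, abs_of_pos hXp, abs_sub_comm, abs_of_nonneg (by linarith),
      div_le_iff₀ hXp]
    nlinarith
  change |a X / X - _| < ε
  have := abs_sub_le (a X / X) (((PS w S X).ncard : ℝ) / X) (c / ZS K ∅)
  have := abs_sub_le (((PS w S X).ncard : ℝ) / X) (c * (ZS K S / ZS K ∅)) (c / ZS K ∅)
  linarith
end PartA1

section PartB1
open NumberField Filter Module
open scoped nonZeroDivisors Topology
open NumberField.InfinitePlace NumberField.mixedEmbedding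
open NumberField.mixedEmbedding.euclidean NumberField.mixedEmbedding.fundamentalCone

/-- counting in the cone -/
def CS (K : Type*) [Field K] [NumberField K] (A : Set K) (X : ℝ) : Set K :=
  {x | x ∈ A ∧ mixedEmbedding K x ∈ fundamentalCone K ∧
    mixedEmbedding.norm (mixedEmbedding K x) ≤ X}

open Classical in
/-- density -/
noncomputable def dens (K : Type*) [Field K] [NumberField K]
    (I : (FractionalIdeal (𝓞 K)⁰ K)ˣ) : ℝ :=
  MeasureTheory.volume.real (normLeOne K) / ZLattice.covolume (idealLattice K I)

theorem lattice_count (K : Type*) [Field K] [NumberField K]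
    (I J : (FractionalIdeal (𝓞 K)⁰ K)ˣ) (L : Submodule ℤ K)
    (hI : ∀ x, x ∈ (I : FractionalIdeal (𝓞 K)⁰ K) → x ∈ L)
    (hJ : ∀ x ∈ L, x ∈ (J : FractionalIdeal (𝓞 K)⁰ K)) :
    Tendsto (fun X : ℝ => ((CS K L X).ncard : ℝ) / X) atTop
      (𝓝 (dens K I * ((((I : FractionalIdeal (𝓞 K)⁰ K) : Submodule (𝓞 K) K).toAddSubgroup.relIndex
        L.toAddSubgroup : ℕ) : ℝ))) := by
  classical
  have h₁ : ∀ s : ℝ,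
    {x | x ∈ toMixed K ⁻¹' fundamentalCone K ∧ mixedEmbedding.norm (toMixed K x) ≤ s} =
      toMixed K ⁻¹' {x | x ∈ fundamentalCone K ∧ mixedEmbedding.norm x ≤ s} := fun _ ↦ rfl
  have h₂ : {x | x ∈ fundamentalCone K ∧ mixedEmbedding.norm x ≤ 1} = normLeOne K := by ext; simp
  let e : K →ₗ[ℤ] mixedSpace K := (mixedEmbedding K).toIntAlgHom.toLinearMap
  have he : ∀ x, e x = mixedEmbedding K x := fun x => rfl
  let M : Submodule ℤ (mixedSpace K) := L.map e
  have hIM : idealLattice K I ≤ M := by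
    intro x hx
    obtain ⟨y, hy, rfl⟩ := (mem_idealLattice K I).1 hx
    exact ⟨y, hI y hy, rfl⟩
  have hMJ : M ≤ idealLattice K J := by
    rintro _ ⟨y, hy, rfl⟩
    exact (mem_idealLattice K J).2 ⟨y, hJ y hy, rfl⟩
  have : DiscreteTopology M := by
    have hdJ : DiscreteTopology (idealLattice K J) := inferInstance
    exact DiscreteTopology.of_subset (s := (idealLattice K J : Set (mixedSpace K))) hdJ hMJ
  have : IsZLattice ℝ M := ⟨by
    rw [eq_top_iff, ← IsZLattice.span_top (K := ℝ) (L := idealLattice K I)]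
    exact Submodule.span_mono hIM⟩
  let f : K →+ euclidean.mixedSpace K :=
    ((toMixed K).symm.toLinearMap.toAddMonoidHom).comp e.toAddMonoidHom
  have hf : ∀ x, f x = (toMixed K).symm (mixedEmbedding K x) := fun x => rfl
  have hfinj : Function.Injective f := fun x y h => by
    rw [hf, hf] at h
    exact mixedEmbedding_injective K ((toMixed K).symm.injective h)
  have hcov : ZLattice.covolume (idealLattice K I) / ZLattice.covolume M =
      ((((I : FractionalIdeal (𝓞 K)⁰ K) : Submodule (𝓞 K) K).toAddSubgroup.relIndex
        L.toAddSubgroup : ℕ) : ℝ) := by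
    rw [← ZLattice.covolume_comap (idealLattice K I) _ _ (volumePreserving_toMixed K),
      ← ZLattice.covolume_comap M _ _ (volumePreserving_toMixed K),
      ZLattice.covolume_div_covolume_eq_relIndex'
        (ZLattice.comap ℝ (idealLattice K I) (toMixed K).toLinearMap)
        (ZLattice.comap ℝ M (toMixed K).toLinearMap) (fun x hx => hIM hx)]
    congr 1
    rw [← AddSubgroup.relIndex_map_map_of_injective _ _ hfinj]
    congr 1
    · ext x
      simp only [AddSubgroup.mem_map, Submodule.mem_toAddSubgroup]
      change toMixed K x ∈ idealLattice K I ↔ _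
      rw [mem_idealLattice]
      constructor
      · rintro ⟨y, hy, h⟩
        exact ⟨y, hy, by rw [hf, h]; simp⟩
      · rintro ⟨y, hy, rfl⟩
        exact ⟨y, hy, by rw [hf]; simp⟩
    · ext x
      simp only [AddSubgroup.mem_map, Submodule.mem_toAddSubgroup]
      change toMixed K x ∈ M ↔ _
      constructor
      · rintro ⟨y, hy, h⟩
        exact ⟨y, hy, by rw [hf, ← he, h]; simp⟩
      · rintro ⟨y, hy, rfl⟩
        exact ⟨y, hy, by rw [hf]; simp [he]⟩
  have hmain := (ZLattice.covolume.tendsto_card_le_div'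
              (ZLattice.comap ℝ M (toMixed K).toLinearMap)
              (F := fun x ↦ mixedEmbedding.norm (toMixed K x)) (X :=
              (toMixed K) ⁻¹' (fundamentalCone K)) (fun _ _ _ h ↦ ?_) (fun _ _ h ↦ ?_)
              ((toMixed K).antilipschitz.isBounded_preimage (isBounded_normLeOne K)) ?_ ?_)
  · convert! hmain using 2 with X
    · congr 1
      rw [Nat.card_coe_set_eq, ← Set.ncard_image_of_injective _ hfinj]
      congr 2
      ext x
      constructor
      · rintro ⟨y, ⟨hy1, hy2, hy3⟩, rfl⟩
        refine ⟨⟨?_, ?_⟩, ?_⟩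
        · simpa [hf] using hy2
        · simpa [hf] using hy3
        · exact ⟨y, hy1, by rw [hf]; simp [he]⟩
      · rintro ⟨⟨h1, h2⟩, ⟨y, hy, h⟩⟩
        rw [he] at h
        have h' : mixedEmbedding K y = toMixed K x := h
        refine ⟨y, ⟨hy, ?_, ?_⟩, ?_⟩
        · rw [h']; exact h1
        · rw [h']; exact h2
        · rw [hf, h']; simp
    · rw [h₁, h₂, MeasureTheory.measureReal_def, (volumePreserving_toMixed K).measure_preimage
        (measurableSet_normLeOne K).nullMeasurableSet,
        ZLattice.covolume_comap _ _ _ (volumePreserving_toMixed K), ← hcov]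
      have := (ZLattice.covolume_pos (idealLattice K I) MeasureTheory.volume).ne'
      rw [dens, MeasureTheory.measureReal_def]
      field_simp
  · rwa [Set.mem_preimage, map_smul, smul_mem_iff_mem h.ne']
  · rw [map_smul, mixedEmbedding.norm_smul, euclidean.finrank, abs_of_nonneg h]
  · exact (toMixed K).continuous.measurable (measurableSet_normLeOne K)
  · rw [h₁, ← (toMixed K).coe_toHomeomorph, ← Homeomorph.preimage_frontier,
      (toMixed K).coe_toHomeomorph, (volumePreserving_toMixed K).measure_preimage
      measurableSet_frontier.nullMeasurableSet, h₂, volume_frontier_normLeOne]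
end PartB1

section PartB2
open NumberField Filter Module
open scoped nonZeroDivisors Topology Pointwise
open NumberField.InfinitePlace NumberField.mixedEmbedding
open NumberField.mixedEmbedding.euclidean NumberField.mixedEmbedding.fundamentalCone

theorem CS_finite (K : Type*) [Field K] [NumberField K]
    (J : (FractionalIdeal (𝓞 K)⁰ K)ˣ) (A : Set K)
    (hA : ∀ x ∈ A, x ∈ (J : FractionalIdeal (𝓞 K)⁰ K)) (X : ℝ) : (CS K A X).Finite := by
  classical
  let c : ℝ := max X 1
  have hc1 : 1 ≤ c := le_max_right _ _
  have hc0 : 0 < c := by linarith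
  have hb : Bornology.IsBounded (c • normLeOne K) := (isBounded_normLeOne K).smul₀ c
  have hfin : (c • normLeOne K ∩ (idealLattice K J : Set (mixedSpace K))).Finite := by
    have hdJ : DiscreteTopology (idealLattice K J) := inferInstance
    have h1 : DiscreteTopology (↥(idealLattice K J).toAddSubgroup) := hdJ
    have h2 : IsDiscrete (idealLattice K J : Set (mixedSpace K)) := ⟨hdJ⟩
    refine Metric.finite_isBounded_inter_isClosed h2 hb ?_
    rw [← Submodule.coe_toAddSubgroup]
    exact AddSubgroup.isClosed_of_discrete
  refine Set.Finite.of_finite_image (f := mixedEmbedding K) (hfin.subset ?_)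
    (mixedEmbedding_injective K).injOn
  rintro _ ⟨x, ⟨h1, h2, h3⟩, rfl⟩
  refine ⟨?_, (mem_idealLattice K J).2 ⟨x, hA x h1, rfl⟩⟩
  rw [Set.mem_smul_set_iff_inv_smul_mem₀ hc0.ne', mem_normLeOne]
  refine ⟨smul_mem_of_mem h2 (inv_ne_zero hc0.ne'), ?_⟩
  rw [mixedEmbedding.norm_smul, abs_of_pos (inv_pos.2 hc0), inv_pow, inv_mul_le_iff₀ (by positivity),
    mul_one]
  have : c ≤ c ^ finrank ℚ K := le_self_pow₀ hc1 finrank_pos.ne'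
  exact h3.trans ((le_max_left _ _).trans this)

theorem double_lattice {K : Type*} [AddCommGroup K] (M : Submodule ℤ K) (z : K)
    (h2 : z + z ∈ M) (h1 : z ∉ M) : ∃ L : Submodule ℤ K, (∀ x, x ∈ L ↔ x ∈ M ∨ x - z ∈ M) ∧
      M.toAddSubgroup.relIndex L.toAddSubgroup = 2 := by
  let A : AddSubgroup K :=
    { carrier := {x | x ∈ M ∨ x - z ∈ M}
      zero_mem' := Or.inl M.zero_mem
      add_mem' := by
        rintro a b (ha | ha) (hb | hb)
        · exact Or.inl (M.add_mem ha hb)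
        · right; convert M.add_mem ha hb using 1; abel
        · right; convert M.add_mem ha hb using 1; abel
        · left; convert M.add_mem (M.add_mem ha hb) h2 using 1; abel
      neg_mem' := by
        rintro a (ha | ha)
        · exact Or.inl (M.neg_mem ha)
        · right; convert M.neg_mem (M.add_mem ha h2) using 1; abel }
  refine ⟨AddSubgroup.toIntSubmodule A, fun x => Iff.rfl, ?_⟩
  rw [AddSubgroup.relIndex_eq_two_iff]
  refine ⟨z, Or.inr (by simp), ?_⟩
  rintro b (hb | hb)
  · right
    refine ⟨hb, fun h => h1 ?_⟩
    convert M.sub_mem h hb using 1; abel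
  · left
    refine ⟨?_, fun h => h1 ?_⟩
    · change b + z ∈ M
      convert M.add_mem hb h2 using 1; abel
    · convert M.sub_mem h hb using 1; abel

theorem CS_union (K : Type*) [Field K] [NumberField K] (J : (FractionalIdeal (𝓞 K)⁰ K)ˣ)
    (A B : Set K) (hA : ∀ x ∈ A, x ∈ (J : FractionalIdeal (𝓞 K)⁰ K))
    (hB : ∀ x ∈ B, x ∈ (J : FractionalIdeal (𝓞 K)⁰ K)) (hd : Disjoint A B) (X : ℝ) :
    (CS K (A ∪ B) X).ncard = (CS K A X).ncard + (CS K B X).ncard := by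
  rw [← Set.ncard_union_eq ?_ (CS_finite K J A hA X) (CS_finite K J B hB X)]
  · congr 1
    ext x
    simp only [CS, Set.mem_setOf_eq, Set.mem_union]
    tauto
  · rw [Set.disjoint_left] at hd ⊢
    intro x h1 h2
    exact hd h1.1 h2.1

theorem CS_neg (K : Type*) [Field K] [NumberField K] (A : Set K) (X : ℝ) :
    (CS K (-A) X).ncard = (CS K A X).ncard := by
  rw [← Set.ncard_image_of_injective (CS K A X) (neg_injective)]
  congr 1
  have hn : ∀ x : K, mixedEmbedding K (-x) = (-1 : ℝ) • mixedEmbedding K x := by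
    intro x; rw [map_neg, neg_one_smul]
  ext x
  simp only [Set.image_neg_eq_neg, Set.mem_neg, CS, Set.mem_setOf_eq]
  rw [hn, smul_mem_iff_mem (by norm_num), mixedEmbedding.norm_smul]
  simp

theorem coset_count (K : Type*) [Field K] [NumberField K]
    (I J : (FractionalIdeal (𝓞 K)⁰ K)ˣ)
    (hIJ : (I : FractionalIdeal (𝓞 K)⁰ K) ≤ J) (z : K)
    (hz : z ∈ (J : FractionalIdeal (𝓞 K)⁰ K))
    (hz4 : (4 : K) * z ∈ (I : FractionalIdeal (𝓞 K)⁰ K)) :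
    Tendsto (fun X : ℝ =>
      ((CS K {x | x - z ∈ (I : FractionalIdeal (𝓞 K)⁰ K)} X).ncard : ℝ) / X) atTop
      (𝓝 (dens K I)) := by
  let M : Submodule ℤ K :=
    AddSubgroup.toIntSubmodule ((I : FractionalIdeal (𝓞 K)⁰ K) : Submodule (𝓞 K) K).toAddSubgroup
  have hM : ∀ x, x ∈ M ↔ x ∈ (I : FractionalIdeal (𝓞 K)⁰ K) := fun x => Iff.rfl
  have hMJ : ∀ x ∈ M, x ∈ (J : FractionalIdeal (𝓞 K)⁰ K) := fun x hx => hIJ hx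
  have hJadd : ∀ x y, x ∈ (J : FractionalIdeal (𝓞 K)⁰ K) → y ∈ (J : FractionalIdeal (𝓞 K)⁰ K) →
    x + y ∈ (J : FractionalIdeal (𝓞 K)⁰ K) := fun x y hx hy => Submodule.add_mem _ hx hy
  have hJsub : ∀ x y, x - y ∈ (J : FractionalIdeal (𝓞 K)⁰ K) → y ∈ (J : FractionalIdeal (𝓞 K)⁰ K) →
    x ∈ (J : FractionalIdeal (𝓞 K)⁰ K) := fun x y hx hy => by
      have := hJadd _ _ hx hy
      rwa [sub_add_cancel] at this
  have hcM := lattice_count K I J M (fun x hx => hx) hMJ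
  rw [show (((I : FractionalIdeal (𝓞 K)⁰ K) : Submodule (𝓞 K) K).toAddSubgroup.relIndex
        M.toAddSubgroup) = 1 from AddSubgroup.relIndex_self _, Nat.cast_one, mul_one] at hcM
  by_cases h1 : z ∈ M
  · have hS : {x | x - z ∈ (I : FractionalIdeal (𝓞 K)⁰ K)} = (M : Set K) := by
      ext x
      simp only [Set.mem_setOf_eq, SetLike.mem_coe, ← hM]
      exact ⟨fun h => by simpa using M.add_mem h h1, fun h => M.sub_mem h h1⟩
    rw [hS]
    exact hcM
  by_cases h2 : z + z ∈ M
  · obtain ⟨L, hL, hi⟩ := double_lattice M z h2 h1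
    have hLJ : ∀ x ∈ L, x ∈ (J : FractionalIdeal (𝓞 K)⁰ K) := fun x hx => by
      rcases (hL x).1 hx with h | h
      · exact hMJ x h
      · exact hJsub x z (hMJ _ h) hz
    have hcL := lattice_count K I J L (fun x hx => (hL x).2 (Or.inl hx)) hLJ
    rw [show (((I : FractionalIdeal (𝓞 K)⁰ K) : Submodule (𝓞 K) K).toAddSubgroup.relIndex
        L.toAddSubgroup) = 2 from hi] at hcL
    convert hcL.sub hcM using 1
    · ext X
      have := CS_union K J M {x | x - z ∈ (I : FractionalIdeal (𝓞 K)⁰ K)} hMJ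
        (fun x hx => hJsub x z (hIJ hx) hz) (by
          rw [Set.disjoint_left]
          intro x hx hx'
          apply h1
          have := M.sub_mem hx ((hM _).2 hx')
          simpa using this) X
      rw [show (M : Set K) ∪ {x | x - z ∈ (I : FractionalIdeal (𝓞 K)⁰ K)} = (L : Set K) by
        ext x; simp only [Set.mem_union, SetLike.mem_coe, Set.mem_setOf_eq, ← hM, hL]] at this
      rw [this]
      push_cast
      ring
    · congr 1
      push_cast
      ring
  · have h4 : (z + z) + (z + z) ∈ M := by
      rw [hM]; convert hz4 using 1; ring
    obtain ⟨L2, hL2, hi2⟩ := double_lattice M (z + z) h4 h2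
    have hz2J := hJadd z z hz hz
    have hL2J : ∀ x ∈ L2, x ∈ (J : FractionalIdeal (𝓞 K)⁰ K) := fun x hx => by
      rcases (hL2 x).1 hx with h | h
      · exact hMJ x h
      · exact hJsub x _ (hMJ _ h) hz2J
    have hcL2 := lattice_count K I J L2 (fun x hx => (hL2 x).2 (Or.inl hx)) hL2J
    rw [show (((I : FractionalIdeal (𝓞 K)⁰ K) : Submodule (𝓞 K) K).toAddSubgroup.relIndex
        L2.toAddSubgroup) = 2 from hi2] at hcL2
    have h3 : z + z ∈ L2 := (hL2 _).2 (Or.inr (by simp))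
    have h5 : z ∉ L2 := by
      rw [hL2]
      rintro (h | h)
      · exact h1 h
      · apply h1
        have := M.neg_mem h
        simpa using this
    obtain ⟨L1, hL1, hi1⟩ := double_lattice L2 z h3 h5
    have hi : (((I : FractionalIdeal (𝓞 K)⁰ K) : Submodule (𝓞 K) K).toAddSubgroup.relIndex
        L1.toAddSubgroup) = 4 := by
      rw [← AddSubgroup.relIndex_mul_relIndex (K := L2.toAddSubgroup)]
      · rw [hi1]
        change M.toAddSubgroup.relIndex L2.toAddSubgroup * 2 = 4
        rw [hi2]
      · intro x hx; exact (hL2 x).2 (Or.inl hx)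
      · intro x hx; exact (hL1 x).2 (Or.inl hx)
    have hL1J : ∀ x ∈ L1, x ∈ (J : FractionalIdeal (𝓞 K)⁰ K) := fun x hx => by
      rcases (hL1 x).1 hx with h | h
      · exact hL2J x h
      · exact hJsub x _ (hL2J _ h) hz
    have hcL1 := lattice_count K I J L1
      (fun x hx => (hL1 x).2 (Or.inl ((hL2 x).2 (Or.inl hx)))) hL1J
    rw [hi] at hcL1
    let A : Set K := {x | x - z ∈ (I : FractionalIdeal (𝓞 K)⁰ K)}
    have hAJ : ∀ x ∈ A, x ∈ (J : FractionalIdeal (𝓞 K)⁰ K) :=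
      (fun x hx => hJsub x z (hIJ hx) hz)
    have hA : ∀ x, x ∈ A ↔ x - z ∈ M := fun x => Iff.rfl
    have hnA : ∀ x, x ∈ -A ↔ x + z ∈ M := fun x => by
      rw [Set.mem_neg, hA, ← M.neg_mem_iff, neg_sub, sub_neg_eq_add, add_comm]
    have hnAJ : ∀ x ∈ -A, x ∈ (J : FractionalIdeal (𝓞 K)⁰ K) :=
      (fun x hx => by
        have := hAJ _ hx
        have := (J : FractionalIdeal (𝓞 K)⁰ K).coeToSubmodule.neg_mem this
        simpa using this)
    have hd1 : Disjoint A (-A) := by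
      rw [Set.disjoint_left]
      intro x hx hx'
      rw [hA] at hx; rw [hnA] at hx'
      apply h2
      have := M.sub_mem hx' hx
      convert this using 1; abel
    have hd2 : Disjoint (L2 : Set K) (A ∪ -A) := by
      rw [Set.disjoint_left]
      rintro x hx (hx' | hx')
      · rw [hA] at hx'
        apply h5
        have := L2.sub_mem hx ((hL2 _).2 (Or.inl hx'))
        simpa using this
      · rw [hnA] at hx'
        apply h5
        have := L2.sub_mem ((hL2 _).2 (Or.inl hx')) hx
        simpa using this
    convert (hcL1.sub hcL2).mul_const (1 / 2) using 1
    · ext X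
      have hu1 := CS_union K J A (-A) hAJ hnAJ hd1 X
      have hu2 := CS_union K J L2 (A ∪ -A) hL2J
        (fun x hx => hx.elim (hAJ x) (hnAJ x)) hd2 X
      rw [hu1, CS_neg] at hu2
      rw [show (L2 : Set K) ∪ (A ∪ -A) = (L1 : Set K) by
        ext x
        simp only [Set.mem_union, SetLike.mem_coe, hA, hnA, hL1, hL2 (x - z)]
        have : x + z ∈ M ↔ x - z - (z + z) ∈ M := by
          constructor
          · intro h; convert M.sub_mem h h4 using 1; abel
          · intro h; convert M.add_mem h h4 using 1; abel
        rw [this]] at hu2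
      rw [hu2]
      push_cast
      change ((CS K A X).ncard : ℝ) / X = _
      ring
    · congr 1
      push_cast
      ring
end PartB2

section PartC1
open NumberField Filter Module
open scoped nonZeroDivisors Topology Pointwise
open NumberField.InfinitePlace NumberField.mixedEmbedding
open NumberField.mixedEmbedding.euclidean NumberField.mixedEmbedding.fundamentalCone

theorem dens_value (K : Type*) [Field K] [NumberField K] (I : (FractionalIdeal (𝓞 K)⁰ K)ˣ)
    (hc : nrComplexPlaces K = 0) :
    dens K I = 2 ^ nrRealPlaces K * NumberField.Units.regulator K /
      ((FractionalIdeal.absNorm (I : FractionalIdeal (𝓞 K)⁰ K) : ℝ) * Real.sqrt |discr K|) := by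
  classical
  unfold dens
  rw [MeasureTheory.measureReal_def, volume_normLeOne, covolume_idealLattice, ENNReal.toReal_mul,
      ENNReal.toReal_mul, ENNReal.toReal_pow, ENNReal.toReal_pow, ENNReal.toReal_ofNat,
      ENNReal.coe_toReal, NNReal.coe_real_pi,
      ENNReal.toReal_ofReal (NumberField.Units.regulator_pos K).le, hc]
  simp

theorem CS_biUnion (K : Type*) [Field K] [NumberField K] (J : (FractionalIdeal (𝓞 K)⁰ K)ˣ)
    {ι : Type*} (A : ι → Set K) (hA : ∀ i, ∀ x ∈ A i, x ∈ (J : FractionalIdeal (𝓞 K)⁰ K))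
    (hd : ∀ i j, i ≠ j → Disjoint (A i) (A j)) (X : ℝ) (s : Finset ι) :
    (CS K (⋃ i ∈ s, A i) X).ncard = ∑ i ∈ s, (CS K (A i) X).ncard := by
  classical
  induction s using Finset.induction_on with
  | empty => simp [CS]
  | insert a s ha ih =>
    rw [Finset.sum_insert ha, ← ih, Finset.set_biUnion_insert]
    apply CS_union K J _ _ (hA a)
    · intro x hx
      simp only [Set.mem_iUnion] at hx
      obtain ⟨i, _, hi⟩ := hx
      exact hA i x hi
    · rw [Set.disjoint_iUnion₂_right]
      intro i hi
      exact hd a i (fun h => ha (h ▸ hi))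

/-- the twisted square sets -/
def TS {K : Type*} [Field K] [NumberField K] (q : FractionalIdeal (𝓞 K)⁰ K) (ε : K) : Set K :=
  {x | ∃ σ ∈ q, (x - ε * σ ^ 2) / 4 ∈ q * q}

theorem half_mem {K : Type*} [Field K] [NumberField K] (q : FractionalIdeal (𝓞 K)⁰ K)
    (hq : q ≠ 0) (x y : K) (hy : y ∈ q) (h : (x ^ 2 - y ^ 2) / 4 ∈ q * q) : 
    (x - y) / 2 ∈ q := by
  have key : ∀ s ∈ q⁻¹, s * ((x - y) / 2) ∈ (1 : FractionalIdeal (𝓞 K)⁰ K) := by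
    intro s hs
    have h1 : s * y ∈ (1 : FractionalIdeal (𝓞 K)⁰ K) := by
      rw [← inv_mul_cancel₀ hq]
      exact FractionalIdeal.mul_mem_mul hs hy
    have h2 : s * s * ((x ^ 2 - y ^ 2) / 4) ∈ (1 : FractionalIdeal (𝓞 K)⁰ K) := by
      have : (1 : FractionalIdeal (𝓞 K)⁰ K) = (q⁻¹ * q⁻¹) * (q * q) := by
        rw [mul_mul_mul_comm, inv_mul_cancel₀ hq, one_mul]
      rw [this]
      exact FractionalIdeal.mul_mem_mul (FractionalIdeal.mul_mem_mul hs hs) h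
    obtain ⟨a, ha⟩ := (FractionalIdeal.mem_one_iff _).1 h1
    obtain ⟨b, hb⟩ := (FractionalIdeal.mem_one_iff _).1 h2
    rw [FractionalIdeal.mem_one_iff]
    have hint : IsIntegral (𝓞 K) (s * ((x - y) / 2)) := by
      refine ⟨Polynomial.X ^ 2 + Polynomial.C a * Polynomial.X - Polynomial.C b, ?_, ?_⟩
      · monicity!
      · simp only [Polynomial.eval₂_sub, Polynomial.eval₂_add, Polynomial.eval₂_mul,
          Polynomial.eval₂_pow, Polynomial.eval₂_X, Polynomial.eval₂_C]
        rw [ha, hb]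
        ring
    obtain ⟨c, hc⟩ := IsIntegrallyClosed.isIntegral_iff.1 hint
    exact ⟨c, hc⟩
  have hq' : q = (q⁻¹)⁻¹ := (inv_inv q).symm
  rw [hq', FractionalIdeal.mem_inv_iff (inv_ne_zero hq)]
  intro s hs
  rw [mul_comm]
  exact key s hs

theorem TS_count (K : Type*) [Field K] [NumberField K] (q : (FractionalIdeal (𝓞 K)⁰ K)ˣ)
    (hc : nrComplexPlaces K = 0) (ε : (𝓞 K)ˣ) :
    Tendsto (fun X : ℝ =>
      ((CS K (TS (q : FractionalIdeal (𝓞 K)⁰ K) (ε : 𝓞 K)) X).ncard : ℝ) / X) atTop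
      (𝓝 (NumberField.Units.regulator K /
       ((FractionalIdeal.absNorm (q : FractionalIdeal (𝓞 K)⁰ K) : ℝ) ^ 2 *
        Real.sqrt |discr K|))) := by
  classical
  let J := q * q
  have h4 : FractionalIdeal.spanSingleton (𝓞 K)⁰ (4 : K) ≠ 0 := by
    rw [FractionalIdeal.spanSingleton_ne_zero_iff]; norm_num
  let I : (FractionalIdeal (𝓞 K)⁰ K)ˣ := Units.mk0 _ h4 * J
  have hI : ∀ x, x ∈ (I : FractionalIdeal (𝓞 K)⁰ K) ↔ x / 4 ∈ (q * q : FractionalIdeal (𝓞 K)⁰ K) := by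
    intro x
    change x ∈ FractionalIdeal.spanSingleton (𝓞 K)⁰ (4 : K) * (q * q : FractionalIdeal (𝓞 K)⁰ K) ↔ _
    rw [FractionalIdeal.mem_singleton_mul]
    constructor
    · rintro ⟨y, hy, rfl⟩
      rwa [mul_div_cancel_left₀ _ (by norm_num)]
    · intro h
      exact ⟨_, h, by field_simp⟩
  have hJ : (J : FractionalIdeal (𝓞 K)⁰ K) = q * q := rfl
  have hsmul : ∀ (Q : FractionalIdeal (𝓞 K)⁰ K) (a : 𝓞 K) (x : K), x ∈ Q → (a : K) * x ∈ Q := by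
    intro Q a x hx
    have := Submodule.smul_mem (Q : Submodule (𝓞 K) K) a hx
    rwa [Algebra.smul_def] at this
  have hIJ : (I : FractionalIdeal (𝓞 K)⁰ K) ≤ J := by
    intro x hx
    have := hsmul _ 4 _ ((hI x).1 hx)
    rw [hJ]
    convert this using 1
    rw [show ((4 : 𝓞 K) : K) = 4 from map_ofNat (algebraMap (𝓞 K) K) 4]
    ring
  -- basis
  let n := finrank ℚ K
  obtain ⟨b⟩ : Nonempty (Basis (Fin n) ℤ (q : FractionalIdeal (𝓞 K)⁰ K)) := by
    have : finrank ℤ (q : FractionalIdeal (𝓞 K)⁰ K) = n := by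
      rw [NumberField.fractionalIdeal_rank, RingOfIntegers.rank]
    exact ⟨finBasisOfFinrankEq ℤ _ this⟩
  let ρ : (Fin n → Fin 2) → K := fun f => ((∑ i, ((f i : ℕ) : ℤ) • b i : ((q : FractionalIdeal (𝓞 K)⁰ K) : Submodule (𝓞 K) K)) : K)
  have hρ : ∀ f, ρ f ∈ (q : FractionalIdeal (𝓞 K)⁰ K) := fun f => Subtype.property _
  let A : (Fin n → Fin 2) → Set K :=
    fun f => {x | x - (ε : 𝓞 K) * (ρ f) ^ 2 ∈ (I : FractionalIdeal (𝓞 K)⁰ K)}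
  have hz : ∀ f, ((ε : 𝓞 K) : K) * (ρ f) ^ 2 ∈ (J : FractionalIdeal (𝓞 K)⁰ K) := fun f => by
    apply hsmul
    rw [hJ, sq]
    exact FractionalIdeal.mul_mem_mul (hρ f) (hρ f)
  have hz4 : ∀ f, (4 : K) * (((ε : 𝓞 K) : K) * (ρ f) ^ 2) ∈ (I : FractionalIdeal (𝓞 K)⁰ K) := by
    intro f
    rw [hI, mul_div_cancel_left₀ _ (by norm_num)]
    exact hz f
  have hAJ : ∀ f, ∀ x ∈ A f, x ∈ (J : FractionalIdeal (𝓞 K)⁰ K) := by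
    intro f x hx
    have := Submodule.add_mem (J : FractionalIdeal (𝓞 K)⁰ K).coeToSubmodule (hIJ hx) (hz f)
    simpa using this
  have hd : ∀ f g, f ≠ g → Disjoint (A f) (A g) := by
    intro f g hfg
    rw [Set.disjoint_left]
    intro x hx hx'
    apply hfg
    have h1 := Submodule.sub_mem (I : FractionalIdeal (𝓞 K)⁰ K).coeToSubmodule hx' hx
    have h2 : ((ρ f) ^ 2 - (ρ g) ^ 2) / 4 ∈ (q * q : FractionalIdeal (𝓞 K)⁰ K) := by
      have := hsmul _ ((ε⁻¹ : (𝓞 K)ˣ) : 𝓞 K) _ ((hI _).1 h1)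
      convert this using 1
      have : (((ε⁻¹ : (𝓞 K)ˣ) : 𝓞 K) : K) * ((ε : 𝓞 K) : K) = 1 := by
        rw [← map_mul, Units.inv_mul, map_one]
      linear_combination (-(ρ f) ^ 2 / 4 + (ρ g) ^ 2 / 4) * this
    have h3 := half_mem _ q.ne_zero _ _ (hρ g) h2
    let w : ((q : FractionalIdeal (𝓞 K)⁰ K) : Submodule (𝓞 K) K) := ⟨_, h3⟩
    have hw : (2 : ℤ) • w = (∑ i, ((f i : ℕ) : ℤ) • b i) - (∑ i, ((g i : ℕ) : ℤ) • b i) := by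
      apply Subtype.ext
      change (2 : ℤ) • ((ρ f - ρ g) / 2) = ρ f - ρ g
      rw [zsmul_eq_mul]; push_cast; field_simp
    ext i
    have := congrArg (fun v => b.repr v i) hw
    simp only [map_smul, map_sub, Finsupp.smul_apply, Finsupp.sub_apply, Basis.repr_sum_self,
      smul_eq_mul] at this
    have := (f i).2
    have := (g i).2
    omega
  have hU : TS (q : FractionalIdeal (𝓞 K)⁰ K) (ε : 𝓞 K) = ⋃ f ∈ (Finset.univ : Finset (Fin n → Fin 2)), A f := by
    ext x
    simp only [Set.mem_iUnion, Finset.mem_univ, exists_true_left, A, Set.mem_setOf_eq, TS, hI]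
    constructor
    · rintro ⟨σ, hσ, h⟩
      let s : ((q : FractionalIdeal (𝓞 K)⁰ K) : Submodule (𝓞 K) K) := ⟨σ, hσ⟩
      let f : Fin n → Fin 2 := fun i => ⟨(b.repr s i % 2).toNat, by omega⟩
      refine ⟨f, ?_⟩
      let t : ((q : FractionalIdeal (𝓞 K)⁰ K) : Submodule (𝓞 K) K) := ∑ i, (b.repr s i / 2) • b i
      have hst : s = (∑ i, ((f i : ℕ) : ℤ) • b i) + (2 : ℤ) • t := by
        conv_lhs => rw [← b.sum_repr s]
        rw [Finset.smul_sum, ← Finset.sum_add_distrib]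
        refine Finset.sum_congr rfl fun i _ => ?_
        rw [smul_smul, ← add_smul]
        congr 1
        simp only [f]
        omega
      have hst' : σ = ρ f + 2 * (t : K) := by
        have := congrArg (Subtype.val) hst
        change σ = ρ f + (2 : ℤ) • (t : K) at this
        rw [this, zsmul_eq_mul]; norm_num
      have h5 : ((ε : 𝓞 K) : K) * (ρ f * t + t * t) ∈ (q * q : FractionalIdeal (𝓞 K)⁰ K) := by
        apply hsmul
        exact Submodule.add_mem (q * q : FractionalIdeal (𝓞 K)⁰ K).coeToSubmodule
          (FractionalIdeal.mul_mem_mul (hρ f) t.2) (FractionalIdeal.mul_mem_mul t.2 t.2)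
      have := Submodule.add_mem (q * q : FractionalIdeal (𝓞 K)⁰ K).coeToSubmodule h h5
      have h6 : (x - ((ε : 𝓞 K) : K) * ρ f ^ 2) / 4 = (x - ((ε : 𝓞 K) : K) * σ ^ 2) / 4 +
          ((ε : 𝓞 K) : K) * (ρ f * t + t * t) := by
        rw [hst']
        ring
      rw [h6]
      exact this
    · rintro ⟨f, hf⟩
      exact ⟨ρ f, hρ f, hf⟩
  have hlim : ∀ f, _ := fun f => coset_count K I J hIJ (((ε : 𝓞 K) : K) * (ρ f) ^ 2) (hz f) (hz4 f)
  have := tendsto_finset_sum (Finset.univ : Finset (Fin n → Fin 2)) (fun f _ => hlim f)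
  convert this using 1
  · ext X
    rw [hU, CS_biUnion K J A hAJ hd X, Nat.cast_sum, Finset.sum_div]
  · congr 1
    rw [Finset.sum_const, dens_value K I hc, Finset.card_univ]
    have hN : (FractionalIdeal.absNorm (I : FractionalIdeal (𝓞 K)⁰ K) : ℝ) =
        4 ^ n * (FractionalIdeal.absNorm (q : FractionalIdeal (𝓞 K)⁰ K) : ℝ) ^ 2 := by
      change ((FractionalIdeal.absNorm (FractionalIdeal.spanSingleton (𝓞 K)⁰ (4 : K) * (q * q : FractionalIdeal (𝓞 K)⁰ K)) : ℚ) : ℝ) = _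
      rw [map_mul, map_mul, FractionalIdeal.absNorm_span_singleton]
      have : Algebra.norm ℚ (4 : K) = 4 ^ n := by
        have := Algebra.norm_algebraMap (R := ℚ) (S := K) 4
        simpa using this
      rw [this]
      push_cast
      rw [abs_of_nonneg (by positivity)]
      ring
    rw [hN]
    have hr : nrRealPlaces K = n := by
      have := card_add_two_mul_card_eq_rank K
      omega
    have hq0 : (FractionalIdeal.absNorm (q : FractionalIdeal (𝓞 K)⁰ K) : ℝ) ≠ 0 := by
      have := q.ne_zero
      exact_mod_cast (FractionalIdeal.absNorm_eq_zero_iff).not.2 this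
    have hd0 : Real.sqrt |discr K| ≠ 0 := by
      rw [Real.sqrt_ne_zero']
      exact_mod_cast abs_pos.2 (discr_ne_zero K)
    rw [hr, Fintype.card_fun, Fintype.card_fin, Fintype.card_fin, nsmul_eq_mul]
    have : (4 : ℝ) ^ n = 2 ^ n * 2 ^ n := by rw [← mul_pow]; norm_num
    rw [this]
    push_cast
    field_simp
end PartC1

section PartD1
open NumberField Filter Module
open scoped nonZeroDivisors Topology Pointwise
open NumberField.InfinitePlace NumberField.mixedEmbedding
open NumberField.mixedEmbedding.euclidean NumberField.mixedEmbedding.fundamentalCone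

theorem sqrtp_not_rat {p : ℕ} (hp : p.Prime) {K : Type*} [Field K] [NumberField K] {x : K}
    (hx : x ^ 2 = (p : K)) (y : ℚ) : x ≠ algebraMap ℚ K y := by
  apply sqrt_not_mem x (p : ℚ)
  · rw [Rat.isSquare_natCast_iff]
    exact (Nat.prime_iff.1 hp).irreducible.not_isSquare
  · rw [hx]; simp

theorem totReal {p : ℕ} (hp : p.Prime) {K : Type*} [Field K] [NumberField K]
    (hdeg : finrank ℚ K = 2) {x : K} (hx : x ^ 2 = (p : K)) : IsTotallyReal K := by
  refine ⟨fun v => ?_⟩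
  rw [InfinitePlace.isReal_iff]
  set φ := v.embedding
  have h1 : (starRingEnd ℂ) (φ x) = φ x := by
    have h2 : (φ x) ^ 2 = ((Real.sqrt p : ℝ) : ℂ) ^ 2 := by
      rw [← map_pow, hx, ← Complex.ofReal_pow, Real.sq_sqrt (by positivity)]
      simp
    rcases sq_eq_sq_iff_eq_or_eq_neg.1 h2 with h | h
    · rw [h, Complex.conj_ofReal]
    · rw [h, map_neg, Complex.conj_ofReal]
  rw [ComplexEmbedding.isReal_iff]
  ext z
  obtain ⟨a, b, rfl⟩ := exists_coords hdeg x (sqrtp_not_rat hp hx) z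
  rw [ComplexEmbedding.conjugate_coe_eq]
  simp [h1]

theorem torsion_sq {K : Type*} [Field K] [NumberField K] [h : IsTotallyReal K]
    {ζ : (𝓞 K)ˣ} (hζ : ζ ∈ NumberField.Units.torsion K) : ζ ^ 2 = 1 := by
  rw [NumberField.Units.mem_torsion] at hζ
  obtain ⟨v⟩ : Nonempty (InfinitePlace K) := inferInstance
  have hr := h.complexEmbedding_isReal v.embedding
  rw [ComplexEmbedding.isReal_iff] at hr
  have h1 : (starRingEnd ℂ) (v.embedding (ζ : K)) = v.embedding (ζ : K) := by
    conv_rhs => rw [← hr]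
    rw [ComplexEmbedding.conjugate_coe_eq]
  have h2 := hζ v
  rw [← InfinitePlace.norm_embedding_eq] at h2
  have h3 := Complex.mul_conj (v.embedding (ζ : K))
  rw [h1, Complex.normSq_eq_norm_sq, h2] at h3
  have h4 : v.embedding ((ζ : K) * (ζ : K)) = v.embedding 1 := by
    rw [map_mul, h3]; simp
  have h5 := v.embedding.injective h4
  rw [← NumberField.Units.coe_mul, ← NumberField.Units.coe_one] at h5
  rw [sq]
  exact NumberField.Units.coe_injective K h5

theorem exists_eps (K : Type*) [Field K] [NumberField K] [h : IsTotallyReal K]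
    (hdeg : finrank ℚ K = 2) : ∃ ε : (𝓞 K)ˣ,
      (∀ u : (𝓞 K)ˣ, ∃ k : ℤ, ∃ ζ ∈ NumberField.Units.torsion K, u = ζ * ε ^ k) ∧
      (∀ k : ℤ, ε ^ k ∈ NumberField.Units.torsion K → k = 0) := by
  classical
  have hrank : NumberField.Units.rank K = 1 := by
    have h1 := h.finrank
    have h2 := IsTotallyReal.nrComplexPlaces_eq_zero (K := K)
    have h3 := card_eq_nrRealPlaces_add_nrComplexPlaces K
    unfold NumberField.Units.rank
    omega
  let i0 : Fin (NumberField.Units.rank K) := ⟨0, by omega⟩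
  have : Unique (Fin (NumberField.Units.rank K)) := by rw [hrank]; infer_instance
  have hprod : ∀ f : Fin (NumberField.Units.rank K) → (𝓞 K)ˣ, ∏ i, f i = f i0 := fun f =>
    Fintype.prod_subsingleton _ _
  refine ⟨NumberField.Units.fundSystem K i0, fun u => ?_, fun k hk => ?_⟩
  · obtain ⟨⟨ζ, e⟩, h, -⟩ := NumberField.Units.exist_unique_eq_mul_prod K u
    exact ⟨e i0, ζ, ζ.2, by rw [h, hprod]⟩
  · have := (NumberField.Units.exist_unique_eq_mul_prod K (NumberField.Units.fundSystem K i0 ^ k)).unique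
      (y₁ := (1, fun _ => k)) (y₂ := (⟨_, hk⟩, 0)) (by rw [hprod]; simp) (by simp)
    exact congrFun (congrArg Prod.snd this) i0

/-- representatives modulo squares of units -/
def RS (K : Type*) [Field K] [NumberField K] (ε : (𝓞 K)ˣ) : Set K :=
  {x | mixedEmbedding K x ∈ fundamentalCone K ∨
    mixedEmbedding K ((ε : K) * x) ∈ fundamentalCone K}

section
variable {K : Type*} [Field K] [NumberField K]

theorem cone_unit (x : K) (hx : mixedEmbedding K x ∈ fundamentalCone K) (u : (𝓞 K)ˣ) :
    mixedEmbedding K ((u : K) * x) ∈ fundamentalCone K ↔ u ∈ NumberField.Units.torsion K := by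
  rw [← unit_smul_mem_iff_mem_torsion hx u, unitSMul_smul, map_mul]

theorem RS_exists [IsTotallyReal K] (ε : (𝓞 K)ˣ)
    (h1 : ∀ u : (𝓞 K)ˣ, ∃ k : ℤ, ∃ ζ ∈ NumberField.Units.torsion K, u = ζ * ε ^ k)
    (x : K) (hx : x ≠ 0) : ∃ u : (𝓞 K)ˣ, (u : K) ^ 2 * x ∈ RS K ε := by
  obtain ⟨v, hv⟩ := exists_unit_smul_mem (x := mixedEmbedding K x) (by
    rw [norm_eq_norm]; simpa using hx)
  rw [unitSMul_smul, ← map_mul] at hv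
  obtain ⟨k, ζ, hζ, rfl⟩ := h1 v
  have hv' := (cone_unit _ hv ζ⁻¹).2 (inv_mem hζ)
  have e1 : ((ζ⁻¹ : (𝓞 K)ˣ) : K) * (((ζ * ε ^ k : (𝓞 K)ˣ) : K) * x) = ((ε ^ k : (𝓞 K)ˣ) : K) * x := by
    rw [← mul_assoc, ← NumberField.Units.coe_mul]; simp
  rw [e1] at hv'
  rcases Int.even_or_odd' k with ⟨j, rfl | rfl⟩
  · refine ⟨ε ^ j, Or.inl ?_⟩
    rw [← NumberField.Units.coe_pow, ← zpow_natCast, ← zpow_mul]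
    convert hv' using 5
    push_cast; ring
  · refine ⟨ε ^ j, Or.inr ?_⟩
    rw [← mul_assoc, ← NumberField.Units.coe_pow, ← NumberField.Units.coe_mul]
    convert hv' using 4
    rw [zpow_add, zpow_one, mul_comm 2 j, zpow_mul, mul_comm]
    rfl

theorem RS_unique [IsTotallyReal K] (ε : (𝓞 K)ˣ)
    (h1 : ∀ u : (𝓞 K)ˣ, ∃ k : ℤ, ∃ ζ ∈ NumberField.Units.torsion K, u = ζ * ε ^ k)
    (h2 : ∀ k : ℤ, ε ^ k ∈ NumberField.Units.torsion K → k = 0)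
    (x : K) (hx : x ∈ RS K ε) (u : (𝓞 K)ˣ) (hu : (u : K) ^ 2 * x ∈ RS K ε) : u ^ 2 = 1 := by
  obtain ⟨k, ζ, hζ, rfl⟩ := h1 u
  have key : ∀ (y : K) (j : ℤ), mixedEmbedding K y ∈ fundamentalCone K →
      mixedEmbedding K ((((ζ * ε ^ k) ^ 2 * ε ^ j : (𝓞 K)ˣ) : K) * y) ∈ fundamentalCone K →
      2 * k + j = 0 := by
    intro y j hy hy'
    apply h2
    have := (cone_unit y hy _).1 hy'
    have h3 := mul_mem (inv_mem (pow_mem hζ 2)) this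
    convert h3 using 1
    rw [zpow_add, mul_pow, mul_comm 2 k, zpow_mul]
    simp only [mul_assoc, inv_mul_cancel_left]
    rfl
  have hk : k = 0 := by
    rcases hx with hx | hx <;> rcases hu with hu | hu
    · have := key x 0 hx (by simpa using hu)
      omega
    · have := key x 1 hx (by
        convert hu using 2
        push_cast; simp; ring)
      omega
    · have := key _ (-1) hx (by
        convert hu using 2
        simp
        field_simp)
      omega
    · have := key _ 0 hx (by
        convert hu using 2
        push_cast; simp; ring)
      omega
  rw [hk]
  simp [torsion_sq hζ]
end
end PartD1

section PartD2
open NumberField Filter Module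
open scoped nonZeroDivisors Topology Pointwise
open NumberField.InfinitePlace NumberField.mixedEmbedding
open NumberField.mixedEmbedding.euclidean NumberField.mixedEmbedding.fundamentalCone

section
variable {K : Type*} [Field K] [NumberField K]

/-- representatives in a given class with bounded norm -/
def WS (q : FractionalIdeal (𝓞 K)⁰ K) (ε : (𝓞 K)ˣ) (X : ℝ) : Set K :=
  {x | x ∈ TS q 1 ∧ x ∈ RS K ε ∧ |(Algebra.norm ℚ x : ℝ)| ≤ X}

/-- the nonsquare ones -/
def NS (q : FractionalIdeal (𝓞 K)⁰ K) (ε : (𝓞 K)ˣ) (X : ℝ) : Set K :=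
  {x | x ∈ TS q 1 ∧ x ∈ RS K ε ∧ ¬ IsSquare x ∧ |(Algebra.norm ℚ x : ℝ)| ≤ X}

theorem norm_eq' (x : K) : mixedEmbedding.norm (mixedEmbedding K x) = |(Algebra.norm ℚ x : ℝ)| := by
  rw [norm_eq_norm]; push_cast; rfl

theorem norm_unit_mul (u : (𝓞 K)ˣ) (x : K) :
    mixedEmbedding.norm (mixedEmbedding K ((u : K) * x)) = mixedEmbedding.norm (mixedEmbedding K x) := by
  rw [map_mul, map_mul, norm_unit, one_mul]

theorem fi_smul_mem (Q : FractionalIdeal (𝓞 K)⁰ K) (a : 𝓞 K) (x : K) (hx : x ∈ Q) :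
    (a : K) * x ∈ Q := by
  have := Submodule.smul_mem (Q : Submodule (𝓞 K) K) a hx
  rwa [Algebra.smul_def] at this

theorem fi_unit_mem (Q : FractionalIdeal (𝓞 K)⁰ K) (u : (𝓞 K)ˣ) (x : K) :
    (u : K) * x ∈ Q ↔ x ∈ Q := by
  refine ⟨fun h => ?_, fun h => fi_smul_mem Q u x h⟩
  have := fi_smul_mem Q ((u⁻¹ : (𝓞 K)ˣ) : 𝓞 K) _ h
  rwa [← mul_assoc, ← map_mul, Units.inv_mul, map_one, one_mul] at this

theorem TS_sub (q : FractionalIdeal (𝓞 K)⁰ K) (ε : (𝓞 K)ˣ) (x : K)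
    (hx : x ∈ TS q (ε : 𝓞 K)) : x ∈ q * q := by
  obtain ⟨σ, hσ, h⟩ := hx
  have h1 : ((ε : 𝓞 K) : K) * σ ^ 2 ∈ q * q := by
    apply fi_smul_mem
    rw [sq]
    exact FractionalIdeal.mul_mem_mul hσ hσ
  have h2 := fi_smul_mem _ 4 _ h
  rw [show ((4 : 𝓞 K) : K) = 4 from map_ofNat (algebraMap (𝓞 K) K) 4] at h2
  have h3 := Submodule.add_mem (q * q).coeToSubmodule h2 h1
  have h4 : 4 * ((x - ((ε : 𝓞 K) : K) * σ ^ 2) / 4) + ((ε : 𝓞 K) : K) * σ ^ 2 = x := by ring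
  rw [h4] at h3
  exact h3

theorem TS_mul (q : FractionalIdeal (𝓞 K)⁰ K) (ε : (𝓞 K)ˣ) (x : K) :
    (ε : K) * x ∈ TS q (ε : 𝓞 K) ↔ x ∈ TS q 1 := by
  unfold TS
  simp only [Set.mem_setOf_eq]
  refine exists_congr fun σ => and_congr_right fun _ => ?_
  have : ((ε : 𝓞 K) : K) * x - ((ε : 𝓞 K) : K) * σ ^ 2 = ((ε : 𝓞 K) : K) * (x - 1 * σ ^ 2) := by ring
  rw [this, mul_div_assoc]
  exact fi_unit_mem _ ε _

theorem WS_split (q : (FractionalIdeal (𝓞 K)⁰ K)ˣ) (ε : (𝓞 K)ˣ)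
    (h2 : ∀ k : ℤ, ε ^ k ∈ NumberField.Units.torsion K → k = 0) (X : ℝ) :
    (WS (q : FractionalIdeal (𝓞 K)⁰ K) ε X).Finite ∧ 
    (WS (q : FractionalIdeal (𝓞 K)⁰ K) ε X).ncard =
      (CS K (TS (q : FractionalIdeal (𝓞 K)⁰ K) ((1 : (𝓞 K)ˣ) : 𝓞 K)) X).ncard +
      (CS K (TS (q : FractionalIdeal (𝓞 K)⁰ K) (ε : 𝓞 K)) X).ncard := by
  have hinj : Function.Injective (fun x : K => (ε : K) * x) := fun x y h => by
    simpa using h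
  let B : Set K := (fun x : K => (ε : K) * x) ⁻¹' (CS K (TS (q : FractionalIdeal (𝓞 K)⁰ K) (ε : 𝓞 K)) X)
  have hf1 := CS_finite K (q * q) _ (TS_sub (q : FractionalIdeal (𝓞 K)⁰ K) 1) X
  have hf2 := CS_finite K (q * q) _ (TS_sub (q : FractionalIdeal (𝓞 K)⁰ K) ε) X
  have hBf : B.Finite := hf2.preimage hinj.injOn
  have hB : B.ncard = (CS K (TS (q : FractionalIdeal (𝓞 K)⁰ K) (ε : 𝓞 K)) X).ncard := by
    apply Set.ncard_preimage_of_injective_subset_range hinj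
    intro y _
    refine ⟨(ε : K)⁻¹ * y, ?_⟩
    simp
  have hU : WS (q : FractionalIdeal (𝓞 K)⁰ K) ε X =
      CS K (TS (q : FractionalIdeal (𝓞 K)⁰ K) ((1 : (𝓞 K)ˣ) : 𝓞 K)) X ∪ B := by
    ext x
    simp only [WS, CS, RS, B, Set.mem_setOf_eq, Set.mem_union, Set.mem_preimage, TS_mul,
      norm_unit_mul, Units.val_one, map_one, ← norm_eq']
    tauto
  rw [hU]
  refine ⟨hf1.union hBf, ?_⟩
  rw [Set.ncard_union_eq ?_ hf1 hBf, hB]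
  rw [Set.disjoint_left]
  rintro x ⟨_, hx, _⟩ ⟨_, hx', _⟩
  have := (cone_unit x hx ε).1 hx'
  have := h2 1 (by simpa using this)
  omega

theorem sq_count [IsTotallyReal K] (q : FractionalIdeal (𝓞 K)⁰ K) (hq : q ≤ 1) (ε : (𝓞 K)ˣ)
    (h1 : ∀ u : (𝓞 K)ˣ, ∃ k : ℤ, ∃ ζ ∈ NumberField.Units.torsion K, u = ζ * ε ^ k)
    (h2 : ∀ k : ℤ, ε ^ k ∈ NumberField.Units.torsion K → k = 0) (X : ℝ) (hX : 0 ≤ X) :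
    (WS q ε X ∩ {x | IsSquare x}).ncard ≤
      Nat.card {I : Ideal (𝓞 K) // Ideal.absNorm I ≤ Real.sqrt X} := by
  classical
  have hfin : {I : Ideal (𝓞 K) | (Ideal.absNorm I : ℝ) ≤ Real.sqrt X}.Finite := by
    have := Ideal.finite_setOfPred_absNorm_le (S := 𝓞 K) ⌊Real.sqrt X⌋₊
    refine this.subset ?_
    intro I hI
    exact Nat.le_floor hI
  change _ ≤ Nat.card ({I : Ideal (𝓞 K) | (Ideal.absNorm I : ℝ) ≤ Real.sqrt X} : Set _)
  rw [Nat.card_coe_set_eq]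
  have hex : ∀ x ∈ WS q ε X ∩ {x | IsSquare x}, ∃ β : 𝓞 K, (β : K) ^ 2 = x := by
    rintro x ⟨⟨hx, -, -⟩, ⟨b, hb⟩⟩
    have h3 : x ∈ q * q := by
      apply TS_sub q 1
      simpa using hx
    have h4 : x ∈ (1 : FractionalIdeal (𝓞 K)⁰ K) := by
      have : q * q ≤ 1 := mul_le_one' hq hq
      exact this h3
    rw [mem_one_iff_int] at h4
    have h5 : IsIntegral ℤ b := by
      apply IsIntegral.of_pow (n := 2) (by norm_num)
      rwa [sq, ← hb]
    exact ⟨⟨b, h5⟩, by rw [hb, sq]; rfl⟩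
  let f : K → Ideal (𝓞 K) := fun x =>
    if h : ∃ β : 𝓞 K, (β : K) ^ 2 = x then Ideal.span {h.choose} else ⊥
  have hf : ∀ x ∈ WS q ε X ∩ {x | IsSquare x}, ∃ β : 𝓞 K, (β : K) ^ 2 = x ∧ f x = Ideal.span {β} := by
    intro x hx
    have := hex x hx
    refine ⟨this.choose, this.choose_spec, ?_⟩
    simp only [f]
    rw [dif_pos this]
  apply Set.ncard_le_ncard_of_injOn f _ _ hfin
  · intro x hx
    obtain ⟨β, hβ, hfx⟩ := hf x hx
    rw [Set.mem_setOf_eq, hfx, Ideal.absNorm_span_singleton]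
    apply Real.le_sqrt_of_sq_le
    have := hx.1.2.2
    rw [← hβ, map_pow] at this
    convert this using 1
    rw [← Algebra.coe_norm_int]
    push_cast
    rw [abs_pow]
    simp [Nat.cast_natAbs]
  · intro x hx y hy hxy
    obtain ⟨β, hβ, hfx⟩ := hf x hx
    obtain ⟨γ, hγ, hfy⟩ := hf y hy
    rw [hfx, hfy, Ideal.span_singleton_eq_span_singleton] at hxy
    obtain ⟨u, rfl⟩ := hxy
    have : (u : K) ^ 2 * x = y := by
      rw [← hβ, ← hγ]
      push_cast
      ring
    have hu := RS_unique ε h1 h2 x hx.1.2.1 u (by rw [this]; exact hy.1.2.1)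
    rw [← this]
    have h6 : (u : K) ^ 2 = 1 := by
      rw [← NumberField.Units.coe_pow, hu, NumberField.Units.coe_one]
    rw [h6, one_mul]

theorem NS_finite (q : (FractionalIdeal (𝓞 K)⁰ K)ˣ) (ε : (𝓞 K)ˣ)
    (h2 : ∀ k : ℤ, ε ^ k ∈ NumberField.Units.torsion K → k = 0) (X : ℝ) :
    (NS (q : FractionalIdeal (𝓞 K)⁰ K) ε X).Finite := by
  refine (WS_split q ε h2 X).1.subset ?_
  rintro x ⟨h1, h2, h3, h4⟩
  exact ⟨h1, h2, h4⟩

theorem NS_count [IsTotallyReal K] (q : (FractionalIdeal (𝓞 K)⁰ K)ˣ)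
    (hq : (q : FractionalIdeal (𝓞 K)⁰ K) ≤ 1) (ε : (𝓞 K)ˣ)
    (h1 : ∀ u : (𝓞 K)ˣ, ∃ k : ℤ, ∃ ζ ∈ NumberField.Units.torsion K, u = ζ * ε ^ k)
    (h2 : ∀ k : ℤ, ε ^ k ∈ NumberField.Units.torsion K → k = 0) :
    Tendsto (fun X : ℝ => ((NS (q : FractionalIdeal (𝓞 K)⁰ K) ε X).ncard : ℝ) / X) atTop
      (𝓝 (2 * NumberField.Units.regulator K /
       ((FractionalIdeal.absNorm (q : FractionalIdeal (𝓞 K)⁰ K) : ℝ) ^ 2 *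
        Real.sqrt |discr K|))) := by
  have hc := IsTotallyReal.nrComplexPlaces_eq_zero (K := K)
  have hW : Tendsto (fun X : ℝ => ((WS (q : FractionalIdeal (𝓞 K)⁰ K) ε X).ncard : ℝ) / X) atTop
      (𝓝 (2 * NumberField.Units.regulator K /
       ((FractionalIdeal.absNorm (q : FractionalIdeal (𝓞 K)⁰ K) : ℝ) ^ 2 *
        Real.sqrt |discr K|))) := by
    convert (TS_count K q hc 1).add (TS_count K q hc ε) using 1
    · ext X
      rw [(WS_split q ε h2 X).2]
      push_cast
      ring
    · congr 1; ring
  have hS : Tendsto (fun X : ℝ =>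
      ((WS (q : FractionalIdeal (𝓞 K)⁰ K) ε X ∩ {x | IsSquare x}).ncard : ℝ) / X) atTop (𝓝 0) := by
    have h3 := (NumberField.Ideal.tendsto_norm_le_div_atTop K).comp Real.tendsto_sqrt_atTop
    have h4 := h3.mul (tendsto_inv_atTop_zero.comp Real.tendsto_sqrt_atTop)
    rw [mul_zero] at h4
    refine squeeze_zero' ?_ ?_ h4
    · filter_upwards [eventually_ge_atTop 0] with X hX
      positivity
    · filter_upwards [eventually_gt_atTop 0] with X hX
      simp only [Function.comp]
      rw [div_eq_mul_inv _ (Real.sqrt X), mul_assoc, ← mul_inv, Real.mul_self_sqrt hX.le,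
        ← div_eq_mul_inv]
      gcongr
      exact sq_count _ hq ε h1 h2 X hX.le
  convert hW.sub hS using 1
  · ext X
    have hf := (WS_split q ε h2 X).1
    rw [← sub_div]
    congr 1
    have : NS (q : FractionalIdeal (𝓞 K)⁰ K) ε X =
      WS (q : FractionalIdeal (𝓞 K)⁰ K) ε X \ {x | IsSquare x} := by
      ext x
      simp only [NS, WS, Set.mem_setOf_eq, Set.mem_diff]
      tauto
    rw [this, eq_sub_iff_add_eq, add_comm]
    exact_mod_cast Set.ncard_inter_add_ncard_diff_eq_ncard _ _ hf
  · rw [sub_zero]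
end
end PartD2

section PartE3
open NumberField Filter Module
open scoped nonZeroDivisors Topology Pointwise IntermediateField

section
variable {K : Type*} [Field K] [NumberField K]

theorem nf_of_finrank (L : IntermediateField K (AlgebraicClosure K)) (hL : finrank K L = 2) :
    NumberField L := by
  have : FiniteDimensional K L := FiniteDimensional.of_finrank_pos (by omega)
  have : FiniteDimensional ℚ L := FiniteDimensional.trans ℚ K L
  exact ⟨⟩

/-- characterization of the ideal attached to a nonsquare -/
def IsG (δ : K) (G : FractionalIdeal (𝓞 K)⁰ K) : Prop :=
  G ≠ 0 ∧ ∀ q : FractionalIdeal (𝓞 K)⁰ K, q ≠ 0 →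
        ((∃ σ ∈ q, (δ - σ ^ 2) / 4 ∈ q * q) ↔ G ≤ q)

theorem IsG.unique {δ : K} {G G' : FractionalIdeal (𝓞 K)⁰ K} (h : IsG δ G) (h' : IsG δ G') :
    G = G' := by
  apply le_antisymm
  · exact (h.2 G' h'.1).1 ((h'.2 G' h'.1).2 le_rfl)
  · exact (h'.2 G h.1).1 ((h.2 G h.1).2 le_rfl)

theorem mem_span_mul (l : K) (hl : l ≠ 0) (q : FractionalIdeal (𝓞 K)⁰ K) (x : K) :
    l * x ∈ FractionalIdeal.spanSingleton (𝓞 K)⁰ l * q ↔ x ∈ q := by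
  rw [FractionalIdeal.mem_singleton_mul]
  constructor
  · rintro ⟨y, hy, h⟩
    rwa [mul_left_cancel₀ hl h]
  · intro h; exact ⟨x, h, rfl⟩

theorem IsG.scale {δ : K} {G : FractionalIdeal (𝓞 K)⁰ K} (h : IsG δ G) (l : K) (hl : l ≠ 0) :
    IsG (l ^ 2 * δ) (FractionalIdeal.spanSingleton (𝓞 K)⁰ l * G) := by
  have hs : FractionalIdeal.spanSingleton (𝓞 K)⁰ l ≠ 0 :=
    FractionalIdeal.spanSingleton_ne_zero_iff.2 hl
  refine ⟨mul_ne_zero hs h.1, fun q hq => ?_⟩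
  obtain ⟨q', rfl⟩ : ∃ q', q = FractionalIdeal.spanSingleton (𝓞 K)⁰ l * q' :=
    ⟨(FractionalIdeal.spanSingleton (𝓞 K)⁰ l)⁻¹ * q, by rw [mul_inv_cancel_left₀ hs]⟩
  have hq' : q' ≠ 0 := right_ne_zero_of_mul hq
  have e1 : (FractionalIdeal.spanSingleton (𝓞 K)⁰ l * G ≤
      FractionalIdeal.spanSingleton (𝓞 K)⁰ l * q') ↔ G ≤ q' := by
    constructor
    · intro hh x hx
      rw [← mem_span_mul l hl]
      exact hh ((mem_span_mul l hl _ _).2 hx)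
    · intro hh; exact mul_le_mul_right hh _
  rw [e1, ← h.2 q' hq']
  have e2 : FractionalIdeal.spanSingleton (𝓞 K)⁰ l * q' * (FractionalIdeal.spanSingleton (𝓞 K)⁰ l * q')
      = FractionalIdeal.spanSingleton (𝓞 K)⁰ (l ^ 2) * (q' * q') := by
    rw [mul_mul_mul_comm, FractionalIdeal.spanSingleton_mul_spanSingleton, sq]
  rw [e2]
  have e3 : ∀ τ, (l ^ 2 * δ - (l * τ) ^ 2) / 4 = l ^ 2 * ((δ - τ ^ 2) / 4) := fun τ => by ring
  constructor
  · rintro ⟨σ, hσ, hh⟩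
    obtain ⟨τ, hτ, rfl⟩ := FractionalIdeal.mem_singleton_mul.1 hσ
    rw [e3, mem_span_mul _ (pow_ne_zero 2 hl)] at hh
    exact ⟨τ, hτ, hh⟩
  · rintro ⟨τ, hτ, hh⟩
    refine ⟨l * τ, (mem_span_mul l hl _ _).2 hτ, ?_⟩
    rwa [e3, mem_span_mul _ (pow_ne_zero 2 hl)]

/-- `L` is generated by a square root of `δ` -/
def RelL (δ : K) (L : IntermediateField K (AlgebraicClosure K)) : Prop :=
  ∃ r : AlgebraicClosure K, r ^ 2 = algebraMap K _ δ ∧ L = K⟮r⟯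

theorem RelL.unique {δ : K} {L L' : IntermediateField K (AlgebraicClosure K)}
    (h : RelL δ L) (h' : RelL δ L') : L = L' := by
  obtain ⟨r, hr, rfl⟩ := h
  obtain ⟨s, hs, rfl⟩ := h'
  rcases sq_eq_sq_iff_eq_or_eq_neg.1 (hr.trans hs.symm) with rfl | rfl
  · rfl
  · apply le_antisymm
    · rw [IntermediateField.adjoin_simple_le_iff]
      exact neg_mem (IntermediateField.mem_adjoin_simple_self K s)
    · rw [IntermediateField.adjoin_simple_le_iff]
      have := neg_mem (IntermediateField.mem_adjoin_simple_self K (-s))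
      simpa using this

theorem RelL.scale {δ : K} {L : IntermediateField K (AlgebraicClosure K)}
    (h : RelL δ L) (l : K) (hl : l ≠ 0) : RelL (l ^ 2 * δ) L := by
  obtain ⟨r, hr, rfl⟩ := h
  refine ⟨algebraMap K _ l * r, by rw [mul_pow, hr, map_mul, map_pow], ?_⟩
  have hl' : algebraMap K (AlgebraicClosure K) l ≠ 0 := by simpa using hl
  apply le_antisymm
  · rw [IntermediateField.adjoin_simple_le_iff]
    have := mul_mem (IntermediateField.algebraMap_mem K⟮algebraMap K (AlgebraicClosure K) l * r⟯ l⁻¹)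
      (IntermediateField.mem_adjoin_simple_self K (algebraMap K (AlgebraicClosure K) l * r))
    rw [map_inv₀, inv_mul_cancel_left₀ hl'] at this
    exact this
  · rw [IntermediateField.adjoin_simple_le_iff]
    exact mul_mem (IntermediateField.algebraMap_mem _ l) (IntermediateField.mem_adjoin_simple_self K r)

theorem RelL.finrank {δ : K} (hδ : ¬ IsSquare δ) {L : IntermediateField K (AlgebraicClosure K)}
    (h : RelL δ L) : finrank K L = 2 := by
  obtain ⟨r, hr, rfl⟩ := h
  have hirr : Irreducible (Polynomial.X ^ 2 - Polynomial.C δ) := by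
    apply X_pow_sub_C_irreducible_of_prime Nat.prime_two
    intro b hb
    exact hδ ⟨b, by rw [← hb, sq]⟩
  have hmin : minpoly K r = Polynomial.X ^ 2 - Polynomial.C δ := by
    symm
    apply minpoly.eq_of_irreducible_of_monic hirr
    · simp [hr]
    · exact Polynomial.monic_X_pow_sub_C δ two_ne_zero
  rw [IntermediateField.adjoin.finrank (IsAlgebraic.isIntegral (Algebra.IsAlgebraic.isAlgebraic r)), hmin,
    Polynomial.natDegree_X_pow_sub_C]

theorem exists_RelL (δ : K) : ∃ L, RelL δ L := by
  obtain ⟨r, hr⟩ := IsAlgClosed.exists_pow_nat_eq (algebraMap K (AlgebraicClosure K) δ) two_pos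
  exact ⟨K⟮r⟯, r, hr, rfl⟩

theorem RelL.eq_sq {δ δ' : K} (hδ : ¬ IsSquare δ) (hδ' : ¬ IsSquare δ')
    {L : IntermediateField K (AlgebraicClosure K)}
    (h : RelL δ L) (h' : RelL δ' L) : ∃ l : K, l ≠ 0 ∧ δ' = l ^ 2 * δ := by
  have hfr := h.finrank hδ
  obtain ⟨r, hr, hL⟩ := h
  obtain ⟨s, hs, hL'⟩ := h'
  have hrL : r ∈ L := by rw [hL]; exact IntermediateField.mem_adjoin_simple_self K r
  have hsL : s ∈ L := by rw [hL']; exact IntermediateField.mem_adjoin_simple_self K s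
  have hδ0 : δ' ≠ 0 := by rintro rfl; exact hδ' ⟨0, by simp⟩
  let r' : L := ⟨r, hrL⟩
  let s' : L := ⟨s, hsL⟩
  have hr' : r' ^ 2 = algebraMap K L δ := Subtype.ext hr
  have hs' : s' ^ 2 = algebraMap K L δ' := Subtype.ext hs
  have hnr := sqrt_not_mem r' δ hδ hr'
  obtain ⟨a, b, hab⟩ := exists_coords hfr r' hnr s'
  have h1 : algebraMap K L (2 * a * b) * r' = algebraMap K L (δ' - a ^ 2 - b ^ 2 * δ) := by
    simp only [map_mul, map_sub, map_pow, map_ofNat]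
    rw [← hs', ← hr', hab]
    ring
  have h2 : 2 * a * b = 0 := by
    by_contra hne
    apply hnr ((δ' - a ^ 2 - b ^ 2 * δ) / (2 * a * b))
    rw [map_div₀, eq_div_iff (by simpa using hne), mul_comm, h1]
  have hb : b ≠ 0 := by
    rintro rfl
    refine sqrt_not_mem s' δ' hδ' hs' a ?_
    rw [hab]; simp
  have ha : a = 0 := by
    rcases mul_eq_zero.1 h2 with h | h
    · simpa using h
    · exact absurd h hb
  refine ⟨b, hb, ?_⟩
  apply (algebraMap K L).injective
  rw [← hs', hab, ha]
  simp only [map_mul, map_pow, map_zero]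
  rw [← hr']
  ring

theorem exists_delta (L : IntermediateField K (AlgebraicClosure K)) (hL : finrank K L = 2) :
    ∃ δ : K, ¬ IsSquare δ ∧ RelL δ L := by
  have : FiniteDimensional K L := FiniteDimensional.of_finrank_pos (by omega)
  obtain ⟨α, hα⟩ : ∃ α : L, ∀ x : K, α ≠ algebraMap K L x := by
    by_contra hcon
    push Not at hcon
    have : finrank K L ≤ 1 := finrank_le_one (1 : L) (fun w => by
      obtain ⟨x, hx⟩ := hcon w
      exact ⟨x, by rw [hx, Algebra.smul_def, mul_one]⟩)
    omega
  obtain ⟨c, b, hbc⟩ := exists_coords hL α hα (α ^ 2)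
  let r : L := α - algebraMap K L (b / 2)
  have hr : r ^ 2 = algebraMap K L (c + b ^ 2 / 4) := by
    simp only [r, sub_sq, hbc, map_add, map_div₀, map_pow, map_ofNat]
    ring
  have hnr : ∀ x : K, r ≠ algebraMap K L x := by
    intro x hx
    apply hα (x + b / 2)
    rw [map_add, ← hx]; simp [r]
  refine ⟨c + b ^ 2 / 4, ?_, (r : AlgebraicClosure K), ?_, ?_⟩
  · rintro ⟨y, hy⟩
    rw [hy, ← sq, map_pow] at hr
    rcases sq_eq_sq_iff_eq_or_eq_neg.1 hr with h | h
    · exact hnr y h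
    · exact hnr (-y) (by rw [h, map_neg])
  · have := congrArg (algebraMap L (AlgebraicClosure K)) hr
    exact this
  · apply le_antisymm
    · intro z hz
      obtain ⟨x, y, hxy⟩ := exists_coords hL r hnr ⟨z, hz⟩
      have := congrArg (algebraMap L (AlgebraicClosure K)) hxy
      change z = algebraMap K _ x + algebraMap K _ y * (r : AlgebraicClosure K) at this
      rw [this]
      exact add_mem (IntermediateField.algebraMap_mem _ x) (mul_mem (IntermediateField.algebraMap_mem _ y)
        (IntermediateField.mem_adjoin_simple_self K _))
    · rw [IntermediateField.adjoin_simple_le_iff]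
      exact r.2

theorem RelL.exists_G {δ : K} (hδ : ¬ IsSquare δ) {L : IntermediateField K (AlgebraicClosure K)}
    [NumberField L] (h : RelL δ L) : ∃ G, IsG δ G ∧
      |(discr L : ℚ)| * (FractionalIdeal.absNorm G) ^ 2 =
        (discr K : ℚ) ^ 2 * |Algebra.norm ℚ δ| := by
  have hfr := h.finrank hδ
  obtain ⟨r, hr, hL⟩ := h
  have hrL : r ∈ L := by rw [hL]; exact IntermediateField.mem_adjoin_simple_self K r
  let r' : L := ⟨r, hrL⟩
  have hr' : r' ^ 2 = algebraMap K L δ := Subtype.ext hr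
  obtain ⟨G, h1, h2, h3⟩ := _root_.exists_G hfr r' δ hδ hr'
  exact ⟨G, ⟨h1, h2⟩, h3⟩
end
end PartE3

section PartE4
open NumberField Filter Module
open scoped nonZeroDivisors Topology

section
variable {K : Type*} [Field K] [NumberField K]

/-- weights -/
noncomputable def wt (L : {L : IntermediateField K (AlgebraicClosure K) // finrank K L = 2}) : ℝ :=
  |((@discr L.1 _ (nf_of_finrank L.1 L.2) : ℤ) : ℝ)| / (discr K : ℝ) ^ 2

theorem key_norm {δ : K} (hδ : ¬ IsSquare δ)
    (L : {L : IntermediateField K (AlgebraicClosure K) // finrank K L = 2}) (hL : RelL δ L.1)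
    (I : Ideal (𝓞 K)) (J : (Ideal (𝓞 K))⁰)
    (hG : IsG δ ((I : FractionalIdeal (𝓞 K)⁰ K) * (J : Ideal (𝓞 K)))) :
    wt L * (Ideal.absNorm I : ℝ) ^ 2 * (Ideal.absNorm (J : Ideal (𝓞 K)) : ℝ) ^ 2 =
      |(Algebra.norm ℚ δ : ℝ)| := by
  have := nf_of_finrank L.1 L.2
  obtain ⟨G, hG', h⟩ := hL.exists_G hδ
  rw [hG'.unique hG, map_mul, FractionalIdeal.coeIdeal_absNorm,
    FractionalIdeal.coeIdeal_absNorm] at h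
  have hd : (discr K : ℝ) ≠ 0 := by exact_mod_cast discr_ne_zero K
  have h' := congrArg (fun x : ℚ => (x : ℝ)) h
  push_cast at h'
  unfold wt
  field_simp
  linear_combination h'

theorem exists_class (J : ClassGroup (𝓞 K) → (Ideal (𝓞 K))⁰)
    (hJ : ∀ c, ClassGroup.mk0 (J c) = c) (M : FractionalIdeal (𝓞 K)⁰ K) (hM : M ≠ 0) :
    ∃ c, ∃ l : K, l ≠ 0 ∧ FractionalIdeal.spanSingleton (𝓞 K)⁰ l * M = (J c : Ideal (𝓞 K)) := by
  obtain ⟨a, A, ha, hA⟩ := FractionalIdeal.exists_eq_spanSingleton_mul M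
  have ha' : algebraMap (𝓞 K) K a ≠ 0 := by simpa using ha
  have hA0 : A ≠ 0 := by
    rintro rfl
    apply hM
    rw [hA]; simp
  let A' : (Ideal (𝓞 K))⁰ := ⟨A, mem_nonZeroDivisors_of_ne_zero hA0⟩
  obtain ⟨x, hx, h⟩ := (ClassGroup.mk0_eq_mk0_iff_exists_fraction_ring K (I := A')
    (J := J (ClassGroup.mk0 A'))).1 (hJ _).symm
  refine ⟨ClassGroup.mk0 A', x * algebraMap (𝓞 K) K a, mul_ne_zero hx ha', ?_⟩
  rw [← h, hA, ← mul_assoc, FractionalIdeal.spanSingleton_mul_spanSingleton, mul_assoc,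
    mul_inv_cancel₀ ha', mul_one]

theorem span_unit {l : K} (h : FractionalIdeal.spanSingleton (𝓞 K)⁰ l = 1) :
    ∃ u : (𝓞 K)ˣ, (u : K) = l := by
  have hl : l ∈ (1 : FractionalIdeal (𝓞 K)⁰ K) := by
    rw [← h]; exact FractionalIdeal.mem_spanSingleton_self _ _
  obtain ⟨a, ha⟩ := (FractionalIdeal.mem_one_iff _).1 hl
  have h1 : (1 : K) ∈ FractionalIdeal.spanSingleton (𝓞 K)⁰ l := by
    rw [h]; exact FractionalIdeal.one_mem_one _
  obtain ⟨b, hb⟩ := (FractionalIdeal.mem_spanSingleton _).1 h1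
  have hab : b * a = 1 := by
    apply RingOfIntegers.coe_injective
    rw [map_mul, map_one, ha, ← hb, Algebra.smul_def]
  exact ⟨⟨a, b, by rw [mul_comm]; exact hab, hab⟩, ha⟩

theorem span_unit' (u : (𝓞 K)ˣ) : FractionalIdeal.spanSingleton (𝓞 K)⁰ (u : K) = 1 := by
  have : FractionalIdeal.spanSingleton (𝓞 K)⁰ (u : K) =
    ((Ideal.span {(u : 𝓞 K)} : Ideal (𝓞 K)) : FractionalIdeal (𝓞 K)⁰ K) :=
    (FractionalIdeal.coeIdeal_span_singleton _).symm
  rw [this, Ideal.span_singleton_eq_top.2 u.isUnit, FractionalIdeal.coeIdeal_top]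

theorem nonsq_scale {δ l : K} (hl : l ≠ 0) (h : ¬ IsSquare δ) : ¬ IsSquare (l ^ 2 * δ) := by
  rintro ⟨y, hy⟩
  exact h ⟨y / l, by field_simp; rw [mul_comm, hy]; ring⟩

theorem count_eq [IsTotallyReal K] (ε : (𝓞 K)ˣ)
    (h1 : ∀ u : (𝓞 K)ˣ, ∃ k : ℤ, ∃ ζ ∈ NumberField.Units.torsion K, u = ζ * ε ^ k)
    (h2 : ∀ k : ℤ, ε ^ k ∈ NumberField.Units.torsion K → k = 0)
    (J : ClassGroup (𝓞 K) → (Ideal (𝓞 K))⁰)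
    (hJ : ∀ c, ClassGroup.mk0 (J c) = c) (X : ℝ) :
    (PS (K := K) (wt (K := K)) ∅ X).Finite ∧ (PS (K := K) (wt (K := K)) ∅ X).ncard = ∑ c,
      (NS ((J c : Ideal (𝓞 K)) : FractionalIdeal (𝓞 K)⁰ K) ε
        (X * (Ideal.absNorm (J c : Ideal (𝓞 K)) : ℝ) ^ 2)).ncard := by
  classical
  let S := fun c => NS ((J c : Ideal (𝓞 K)) : FractionalIdeal (𝓞 K)⁰ K) ε
        (X * (Ideal.absNorm (J c : Ideal (𝓞 K)) : ℝ) ^ 2)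
  have hJ0 : ∀ c, ((J c : Ideal (𝓞 K)) : FractionalIdeal (𝓞 K)⁰ K) ≠ 0 := fun c =>
    FractionalIdeal.coeIdeal_ne_zero.2 (nonZeroDivisors.ne_zero (J c).2)
  have hN : ∀ c, 0 < (Ideal.absNorm (J c : Ideal (𝓞 K)) : ℝ) ^ 2 := fun c => by
    have : 0 < Ideal.absNorm (J c : Ideal (𝓞 K)) := Ideal.absNorm_pos_of_nonZeroDivisors (J c)
    positivity
  have hSf : ∀ c, Finite (S c) := fun c =>
    NS_finite (FractionalIdeal.mk0 K (J c)) ε h2 _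
  have hex : ∀ x : (Σ c, S c), ∃ y : PS (K := K) (wt (K := K)) ∅ X,
      RelL x.2.1 y.1.1.1 ∧ IsG x.2.1
      ((y.1.2.1 : FractionalIdeal (𝓞 K)⁰ K) * (J x.1 : Ideal (𝓞 K))) := by
    rintro ⟨c, δ, hT, hR, hsq, hn⟩
    obtain ⟨L, hL⟩ := exists_RelL δ
    have hfr := hL.finrank hsq
    have := nf_of_finrank L hfr
    obtain ⟨G, hG, -⟩ := hL.exists_G hsq
    have hle : G ≤ ((J c : Ideal (𝓞 K)) : FractionalIdeal (𝓞 K)⁰ K) := by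
      rw [← hG.2 _ (hJ0 c)]
      obtain ⟨σ, hσ, h⟩ := hT
      exact ⟨σ, hσ, by simpa using h⟩
    have hle1 : G * ((J c : Ideal (𝓞 K)) : FractionalIdeal (𝓞 K)⁰ K)⁻¹ ≤ 1 := by
      rw [← mul_inv_cancel₀ (hJ0 c)]
      gcongr
    obtain ⟨I, hI⟩ := FractionalIdeal.le_one_iff_exists_coeIdeal.1 hle1
    have hGI : G = (I : FractionalIdeal (𝓞 K)⁰ K) * (J c : Ideal (𝓞 K)) := by
      rw [hI, inv_mul_cancel_right₀ (hJ0 c)]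
    have hI0 : I ≠ ⊥ := by
      rintro rfl
      apply hG.1
      rw [hGI]; simp
    rw [hGI] at hG
    refine ⟨⟨(⟨L, hfr⟩, ⟨I, hI0⟩), ?_, by simp⟩, hL, hG⟩
    have hk := key_norm hsq ⟨L, hfr⟩ hL I (J c) hG
    rw [← hk] at hn
    exact le_of_mul_le_mul_right hn (hN c)
  choose F hF1 hF2 using hex
  have hbij : Function.Bijective F := by
    constructor
    · rintro ⟨c, δ, hT, hR, hsq, hn⟩ ⟨c', δ', hT', hR', hsq', hn'⟩ h
      have a1 := hF1 ⟨c, δ, hT, hR, hsq, hn⟩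
      have a2 := hF2 ⟨c, δ, hT, hR, hsq, hn⟩
      have b1 := hF1 ⟨c', δ', hT', hR', hsq', hn'⟩
      have b2 := hF2 ⟨c', δ', hT', hR', hsq', hn'⟩
      rw [h] at a1 a2
      simp only at a1 a2 b1 b2
      generalize F ⟨c', δ', hT', hR', hsq', hn'⟩ = y at a1 a2 b1 b2
      obtain ⟨l, hl, rfl⟩ := a1.eq_sq hsq hsq' b1
      have hI0 : (y.1.2.1 : FractionalIdeal (𝓞 K)⁰ K) ≠ 0 :=
        FractionalIdeal.coeIdeal_ne_zero.2 y.1.2.2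
      have e1 := (a2.scale l hl).unique b2
      rw [mul_left_comm] at e1
      have e2 := mul_left_cancel₀ hI0 e1
      have hc : c = c' := by
        rw [← hJ c, ← hJ c', ClassGroup.mk0_eq_mk0_iff_exists_fraction_ring K]
        exact ⟨l, hl, e2⟩
      subst hc
      have e3 : FractionalIdeal.spanSingleton (𝓞 K)⁰ l = 1 :=
        mul_right_cancel₀ (hJ0 c) (by rw [e2, one_mul])
      obtain ⟨u, rfl⟩ := span_unit e3
      have hu := RS_unique ε h1 h2 δ hR u hR'
      have h6 : (u : K) ^ 2 = 1 := by
        rw [← NumberField.Units.coe_pow, hu, NumberField.Units.coe_one]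
      congr 2
      rw [h6, one_mul]
    · rintro ⟨⟨L, I⟩, hw, hS⟩
      have := nf_of_finrank L.1 L.2
      obtain ⟨δ0, hsq0, hL0⟩ := exists_delta L.1 L.2
      obtain ⟨G0, hG0, -⟩ := hL0.exists_G hsq0
      have hI0 : (I.1 : FractionalIdeal (𝓞 K)⁰ K) ≠ 0 :=
        FractionalIdeal.coeIdeal_ne_zero.2 I.2
      obtain ⟨c, l, hl, hlc⟩ := exists_class J hJ (G0 * (I.1 : FractionalIdeal (𝓞 K)⁰ K)⁻¹)
        (mul_ne_zero hG0.1 (inv_ne_zero hI0))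
      have hd0 : δ0 ≠ 0 := by rintro rfl; exact hsq0 ⟨0, by simp⟩
      obtain ⟨u, hu⟩ := RS_exists ε h1 (l ^ 2 * δ0) (mul_ne_zero (pow_ne_zero 2 hl) hd0)
      have hu0 : (u : K) ≠ 0 := NumberField.Units.coe_ne_zero u
      set δ := (u : K) ^ 2 * (l ^ 2 * δ0) with hδ
      have hL : RelL δ L.1 := (hL0.scale l hl).scale _ hu0
      have hsq : ¬ IsSquare δ := nonsq_scale hu0 (nonsq_scale hl hsq0)
      have hG : IsG δ ((I.1 : FractionalIdeal (𝓞 K)⁰ K) * (J c : Ideal (𝓞 K))) := by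
        have := (hG0.scale l hl).scale (u : K) hu0
        rw [span_unit', one_mul] at this
        rw [← hlc, mul_left_comm, mul_comm G0, mul_inv_cancel_left₀ hI0]
        exact this
      have hmem : δ ∈ S c := by
        refine ⟨?_, hu, hsq, ?_⟩
        · have hle : (I.1 : FractionalIdeal (𝓞 K)⁰ K) * (J c : Ideal (𝓞 K)) ≤
              ((J c : Ideal (𝓞 K)) : FractionalIdeal (𝓞 K)⁰ K) := by
            rw [← FractionalIdeal.coeIdeal_mul, FractionalIdeal.coeIdeal_le_coeIdeal]
            exact Ideal.mul_le_right (I := I.1) (J := (J c : Ideal (𝓞 K)))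
          rw [← hG.2 _ (hJ0 c)] at hle
          obtain ⟨σ, hσ, h⟩ := hle
          exact ⟨σ, hσ, by simpa using h⟩
        · rw [← key_norm hsq L hL I.1 (J c) hG]
          exact mul_le_mul_of_nonneg_right hw (hN c).le
      refine ⟨⟨c, δ, hmem⟩, ?_⟩
      have a1 := hF1 ⟨c, δ, hmem⟩
      have a2 := hF2 ⟨c, δ, hmem⟩
      simp only at a1 a2
      generalize F ⟨c, δ, hmem⟩ = y at a1 a2
      obtain ⟨⟨L', I'⟩, hy⟩ := y
      simp only at a1 a2
      have e1 : L' = L := Subtype.ext (a1.unique hL)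
      have e2 : I' = I := by
        apply Subtype.ext
        have := mul_right_cancel₀ (hJ0 c) (a2.unique hG)
        exact FractionalIdeal.coeIdeal_injective this
      subst e1 e2
      rfl
  let e := Equiv.ofBijective F hbij
  have hfin : Finite (PS (K := K) (wt (K := K)) ∅ X) := Finite.of_equiv _ e
  refine ⟨hfin, ?_⟩
  rw [← Nat.card_coe_set_eq, ← Nat.card_congr e, Nat.card_sigma]
  simp only [Nat.card_coe_set_eq]
  rfl

theorem count_lim [IsTotallyReal K] (hdeg : finrank ℚ K = 2) :
    (∀ X, (PS (K := K) (wt (K := K)) ∅ X).Finite) ∧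
    Tendsto (fun X : ℝ => ((PS (K := K) (wt (K := K)) ∅ X).ncard : ℝ) / X) atTop
      (𝓝 (2 * NumberField.Units.regulator K * classNumber K / Real.sqrt |discr K|)) := by
  obtain ⟨ε, h1, h2⟩ := exists_eps K hdeg
  choose J hJ using ClassGroup.mk0_surjective (R := 𝓞 K)
  refine ⟨fun X => (count_eq ε h1 h2 J hJ X).1, ?_⟩
  have hN : ∀ c, 0 < (Ideal.absNorm (J c : Ideal (𝓞 K)) : ℝ) ^ 2 := fun c => by
    have : 0 < Ideal.absNorm (J c : Ideal (𝓞 K)) := Ideal.absNorm_pos_of_nonZeroDivisors (J c)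
    positivity
  have hc : ∀ c, Tendsto (fun X : ℝ => ((NS ((J c : Ideal (𝓞 K)) : FractionalIdeal (𝓞 K)⁰ K) ε
        (X * (Ideal.absNorm (J c : Ideal (𝓞 K)) : ℝ) ^ 2)).ncard : ℝ) / X) atTop
      (𝓝 (2 * NumberField.Units.regulator K / Real.sqrt |discr K|)) := by
    intro c
    have := ((NS_count (FractionalIdeal.mk0 K (J c)) (FractionalIdeal.coeIdeal_le_one) ε h1 h2).comp
      (tendsto_id.atTop_mul_const (hN c))).mul_const ((Ideal.absNorm (J c : Ideal (𝓞 K)) : ℝ) ^ 2)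
    convert this using 1
    · ext X
      simp only [Function.comp, id, FractionalIdeal.coe_mk0]
      have := (hN c).ne'
      rw [div_mul_eq_mul_div, mul_div_mul_right _ _ this]
    · congr 1
      rw [FractionalIdeal.coe_mk0, FractionalIdeal.coeIdeal_absNorm]
      have := (hN c).ne'
      have hd0 : Real.sqrt |discr K| ≠ 0 := by
        rw [Real.sqrt_ne_zero']
        exact_mod_cast abs_pos.2 (discr_ne_zero K)
      have h00 : (Ideal.absNorm (J c : Ideal (𝓞 K)) : ℝ) ≠ 0 := fun h => this (by rw [h]; simp)
      push_cast
      field_simp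
  convert tendsto_finset_sum Finset.univ (fun c _ => hc c) using 1
  · ext X
    rw [(count_eq ε h1 h2 J hJ X).2, Nat.cast_sum, Finset.sum_div]
  · congr 1
    rw [Finset.sum_const, Finset.card_univ, nsmul_eq_mul, classNumber]
    ring
end
end PartE4

section PartF
open NumberField Filter Module
open scoped nonZeroDivisors Topology

theorem discr_abs_eq {p : ℕ} (hp : p.Prime) (hpmod : p % 4 = 1)
    {K : Type*} [Field K] [NumberField K] (hdeg : finrank ℚ K = 2) {x : K}
    (hx : x ^ 2 = (p : K)) : |discr K| = (p : ℤ) := by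
  have hsq : ¬ IsSquare (p : ℚ) := by
    rw [Rat.isSquare_natCast_iff]
    exact (Nat.prime_iff.1 hp).irreducible.not_isSquare
  obtain ⟨G, hG0, hG, hd⟩ := exists_G (K := ℚ) (L := K) hdeg x (p : ℚ) hsq (by rw [hx]; simp)
  have hG1 : G ≤ 1 := by
    rw [← hG 1 one_ne_zero]
    refine ⟨1, FractionalIdeal.one_mem_one _, ?_⟩
    rw [one_mul, mem_one_iff_int]
    have : ((p : ℚ) - 1 ^ 2) / 4 = ((p / 4 : ℕ) : ℚ) := by
      have : p = 4 * (p / 4) + 1 := by omega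
      have h2 : (p : ℚ) = 4 * ((p / 4 : ℕ) : ℚ) + 1 := by exact_mod_cast this
      rw [h2]; ring
    rw [this]
    have h := isIntegral_algebraMap (R := ℤ) (A := ℚ) (x := ((p / 4 : ℕ) : ℤ))
    rwa [eq_intCast, Int.cast_natCast] at h
  obtain ⟨I, hI⟩ := FractionalIdeal.le_one_iff_exists_coeIdeal.1 hG1
  rw [← hI, FractionalIdeal.coeIdeal_absNorm] at hd
  have h1 : |discr K| * (Ideal.absNorm I : ℤ) ^ 2 = (p : ℤ) := by
    have : |(discr K : ℚ)| * (Ideal.absNorm I : ℚ) ^ 2 = (p : ℚ) := by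
      have e : ∀ inst : Algebra ℚ ℚ, @Algebra.norm ℚ ℚ _ _ inst (p : ℚ) = p := by
        intro inst
        obtain rfl : inst = Algebra.id ℚ := Subsingleton.elim _ _
        have := Algebra.norm_algebraMap (R := ℚ) (S := ℚ) (p : ℚ)
        simpa using this
      rw [hd, e]; simp
    exact_mod_cast this
  have h2 : Ideal.absNorm I * Ideal.absNorm I ∣ p := by
    have : ((Ideal.absNorm I * Ideal.absNorm I : ℕ) : ℤ) ∣ (p : ℤ) := ⟨|discr K|, by push_cast; linarith⟩
    exact_mod_cast this
  have h3 : Ideal.absNorm I = 1 :=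
    Nat.isUnit_iff.1 ((Nat.prime_iff.1 hp).irreducible.squarefree _ h2)
  rw [h3] at h1
  simpa using h1

theorem prod_two {K : Type*} [Field K] [NumberField K] (hdeg : finrank ℚ K = 2) :
    ∏ᶠ 𝔭 ∈ {𝔭 : Ideal (𝓞 K) | 𝔭.IsPrime ∧ (2 : 𝓞 K) ∈ 𝔭},
          gFactor (Ideal.absNorm 𝔭) 1 / (1 + ((Ideal.absNorm 𝔭 : ℝ))⁻¹) = 1 := by
  apply finprod_mem_eq_one_of_forall_eq_one
  rintro P ⟨hP, h2⟩
  have hd : Ideal.absNorm P ∣ 2 ^ 2 := by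
    have := Ideal.absNorm_dvd_absNorm_of_le ((Ideal.span_singleton_le_iff_mem P).2 h2)
    rw [Ideal.absNorm_span_singleton] at this
    have e : Algebra.norm ℤ (2 : 𝓞 K) = 2 ^ 2 := by
      have := Algebra.norm_algebraMap (R := ℤ) (S := 𝓞 K) 2
      rw [RingOfIntegers.rank, hdeg] at this
      simpa using this
    rw [e] at this
    exact this
  rw [Nat.dvd_prime_pow Nat.prime_two] at hd
  obtain ⟨k, hk, h⟩ := hd
  interval_cases k
  · exact absurd (Ideal.absNorm_eq_one_iff.1 (by simpa using h)) hP.ne_top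
  · rw [h]
    simp only [gFactor]
    norm_num [Real.rpow_neg]
  · rw [h]
    simp only [gFactor]
    norm_num [Real.rpow_neg]

theorem wt_le_iff {K : Type*} [Field K] [NumberField K] {p : ℕ} (hp : 0 < p)
    (hd : |discr K| = (p : ℤ)) (n : ℕ)
    (L : {L : IntermediateField K (AlgebraicClosure K) // finrank K L = 2}) :
    wt L ≤ (n : ℝ) / (p : ℝ) ^ 2 ↔ ∃ h : NumberField L.1, |@discr L.1 _ h| ≤ (n : ℤ) := by
  have h1 : ((discr K : ℤ) : ℝ) ^ 2 = (p : ℝ) ^ 2 := by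
    rw [← sq_abs]
    have : |((discr K : ℤ) : ℝ)| = p := by exact_mod_cast hd
    rw [this]
  have hp' : (0 : ℝ) < p := by exact_mod_cast hp
  unfold wt
  rw [h1, div_le_div_iff_of_pos_right (by positivity)]
  constructor
  · intro h
    exact ⟨nf_of_finrank L.1 L.2, by exact_mod_cast h⟩
  · rintro ⟨h, h'⟩
    exact_mod_cast h'

theorem quadCount_eq {K : Type*} [Field K] [NumberField K] {p : ℕ} (hp : 0 < p)
    (hd : |discr K| = (p : ℤ)) (n : ℕ) :
    quadCount K n = {L | wt (K := K) L ≤ (n : ℝ) / (p : ℝ) ^ 2}.ncard := by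
  rw [quadCount, ← Nat.card_coe_set_eq]
  apply Nat.card_congr
  exact {
    toFun := fun L => ⟨⟨L.1, L.2.1⟩, (wt_le_iff hp hd n _).2 L.2.2⟩
    invFun := fun L => ⟨L.1.1, L.1.2, (wt_le_iff hp hd n _).1 L.2⟩
    left_inv := fun L => rfl
    right_inv := fun L => rfl }
end PartF

theorem quadratic_count_real (p : ℕ) (hp : p.Prime) (hpmod : p % 4 = 1)
    (K : Type*) [Field K] [NumberField K]
    (hdeg : Module.finrank ℚ K = 2) (hsqrt : ∃ x : K, x ^ 2 = (p : K)) :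
    Tendsto (fun n : ℕ => (quadCount K n : ℝ) / (n : ℝ)) atTop
      (nhds ((2 * NumberField.Units.regulator K * (NumberField.classNumber K : ℝ)) /
          ((p : ℝ) ^ ((5 : ℝ) / 2) * dedekindZetaTwo K) *
        ∏ᶠ 𝔭 ∈ {𝔭 : Ideal (𝓞 K) | 𝔭.IsPrime ∧ (2 : 𝓞 K) ∈ 𝔭},
          gFactor (Ideal.absNorm 𝔭) 1 / (1 + ((Ideal.absNorm 𝔭 : ℝ))⁻¹))) := by
  obtain ⟨x, hx⟩ := hsqrt
  have hd := discr_abs_eq hp hpmod hdeg hx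
  have hp0 : 0 < p := hp.pos
  have hp' : (0 : ℝ) < p := by exact_mod_cast hp0
  haveI := totReal hp hdeg hx
  obtain ⟨hfin, hlim⟩ := count_lim (K := K) hdeg
  have hdr : |((discr K : ℤ) : ℝ)| = p := by exact_mod_cast hd
  have hs := sieve (K := K) (wt (K := K)) _ (1 / (p : ℝ) ^ 2) (by positivity) (fun L => by
    unfold wt
    rw [← sq_abs ((discr K : ℤ) : ℝ), hdr]
    apply div_le_div_of_nonneg_right _ (by positivity)
    have := @discr_ne_zero L.1 _ (nf_of_finrank L.1 L.2)
    exact_mod_cast Int.one_le_abs this) hfin hlim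
  have hz : ZS K ∅ = dedekindZetaTwo K := by
    simp [ZS, dedekindZetaTwo]
  rw [hz, hdr] at hs
  rw [prod_two hdeg, mul_one]
  have ht : Tendsto (fun n : ℕ => (n : ℝ) / (p : ℝ) ^ 2) atTop atTop :=
    tendsto_natCast_atTop_atTop.atTop_div_const (by positivity)
  have := (hs.comp ht).div_const ((p : ℝ) ^ 2)
  have hp5 : (p : ℝ) ^ ((5 : ℝ) / 2) = (p : ℝ) ^ 2 * Real.sqrt p := by
    rw [Real.sqrt_eq_rpow, ← Real.rpow_natCast, ← Real.rpow_add hp']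
    norm_num
  rw [hp5]
  convert this using 1
  · ext n
    simp only [Function.comp]
    rw [quadCount_eq hp0 hd, div_div, div_mul_cancel₀ _ (by positivity)]
  · congr 1
    rw [div_div, div_div]
    congr 1
    ring
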